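/- arXiv:1603.06178 — 2 statements merged into one kernel-verified Lean document; each statement's English description precedes it below -/
import Mathlib

section
/- Suppose the NICF expansion of α has ε_i = +1 for all i (so it coincides with the regular continued fraction expansion of α, all of whose partial quotients satisfy a_i ≥ 2), that R := liminf_{i→∞} a_i satisfies 4 ≤ R < ∞, and that γ ∈ [0,1), γ ∉ ℤ + αℤ, satisfies M(α,γ) > M(α,γ_*) − R_*^{−3}. Let (c_i) be the coefficients of the alpha-expansion of γ (c_{i+1} := ⌊γ_i/α_i⌋ with γ_0 := γ, γ_{i+1} := {γ_i/α_i}) and t_i := 2c_i − (a_i − 1 + ε_i) = 2c_i − a_i. Then |t_i| < 2a_i/(R_* − 1) for all but finitely many i; and for all but finitely many indices k with a_k = R: t_k ∈ {−1, +1} if R is odd, and t_k = 0 if R is even. -/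
open Filter Finset

attribute [local instance] Classical.propDecidable

/-- Distance from `x` to the nearest integer, `‖x‖`. -/
noncomputable def nint (x : ℝ) : ℝ := |x - round x|

/-- The two-sided inhomogeneous approximation constant
`M(α,γ) = liminf_{|n|→∞} |n|·‖nα-γ‖`. -/
noncomputable def Mval (α γ : ℝ) : ℝ :=
  Filter.liminf (fun n : ℤ => (|n| : ℝ) * nint (n * α - γ)) Filter.cofinite

/-- `ρ(α) = sup { M(α,γ) : γ ∉ ℤ + αℤ }`. -/
noncomputable def rho (α : ℝ) : ℝ :=
  sSup {m : ℝ | ∃ γ : ℝ, (¬∃ p q : ℤ, γ = (p : ℝ) + (q : ℝ) * α) ∧ m = Mval α γ}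

/-- The tails `α_i` of the nearest integer continued fraction expansion of `α`. -/
noncomputable def nicfT (α : ℝ) : ℕ → ℝ
  | 0 => α
  | i + 1 =>
    if Int.fract (nicfT α i)⁻¹ ≤ 1 / 2 then Int.fract (nicfT α i)⁻¹
    else 1 - Int.fract (nicfT α i)⁻¹

/-- The partial quotients `a_i` (meaningful for `i ≥ 1`) of the NICF expansion. -/
noncomputable def nicfA (α : ℝ) : ℕ → ℤ
  | 0 => 0
  | i + 1 => if Int.fract (nicfT α i)⁻¹ ≤ 1 / 2 then ⌊(nicfT α i)⁻¹⌋ else ⌈(nicfT α i)⁻¹⌉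

/-- The signs `ε_i` of the NICF expansion (`ε_1 = 1`). -/
noncomputable def nicfE (α : ℝ) : ℕ → ℤ
  | 0 => 1
  | 1 => 1
  | i + 2 => if Int.fract (nicfT α i)⁻¹ ≤ 1 / 2 then 1 else -1

/-- `nicfD α n = D_{n-1} = α_0 α_1 ⋯ α_{n-1}` (so `nicfD α 0 = 1`, `nicfD α 1 = α`). -/
noncomputable def nicfD (α : ℝ) (n : ℕ) : ℝ := ∏ j ∈ Finset.range n, nicfT α j

/-- The number of indices `1 ≤ k ≤ i` with `a_k` odd. -/
noncomputable def oddIdx (α : ℝ) (i : ℕ) : ℕ :=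
  ((Finset.Icc 1 i).filter fun k => Odd (nicfA α k)).card

/-- `λ_i`: zero if `a_i` is even, `(-1)^j` if `a_i = a_{n_j}` is the `j`-th odd partial
quotient. -/
noncomputable def lamStar (α : ℝ) (i : ℕ) : ℤ :=
  if Odd (nicfA α i) then (-1) ^ oddIdx α i else 0

/-- `γ_* = Σ_{i≥1} (a_i - 1 + ε_i + λ_i)/2 · D_{i-1}`. -/
noncomputable def gammaStar (α : ℝ) : ℝ :=
  ∑' k : ℕ,
    (((nicfA α (k + 1) : ℝ) - 1 + (nicfE α (k + 1) : ℝ) + (lamStar α (k + 1) : ℝ)) / 2) *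
      nicfD α (k + 1)

/-- `λ'_i`: zero if `a_i` is even, one if `a_i` is odd. -/
noncomputable def lamStar2 (α : ℝ) (i : ℕ) : ℤ := if Odd (nicfA α i) then 1 else 0

/-- `γ_** = Σ_{i≥1} (a_i + λ'_i)/2 · D_{i-1}`. -/
noncomputable def gammaStar2 (α : ℝ) : ℝ :=
  ∑' k : ℕ, (((nicfA α (k + 1) : ℝ) + (lamStar2 α (k + 1) : ℝ)) / 2) * nicfD α (k + 1)

/-- The denominators `q_i`: `q_0 = 1`, `q_1 = a_1`, `q_i = a_i q_{i-1} + ε_i q_{i-2}`. -/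
noncomputable def qseq (α : ℝ) : ℕ → ℤ
  | 0 => 1
  | 1 => nicfA α 1
  | i + 2 => nicfA α (i + 2) * qseq α (i + 1) + nicfE α (i + 2) * qseq α i

/-- `ᾱ_i = q_{i-1}/q_i` (with `ᾱ_0 = 0`). -/
noncomputable def abar (α : ℝ) (i : ℕ) : ℝ :=
  if i = 0 then 0 else (qseq α (i - 1) : ℝ) / (qseq α i : ℝ)

/-- `δ_i = -(-ε_1)(-ε_2)⋯(-ε_{i+1})`. -/
noncomputable def deltaSeq (α : ℝ) (i : ℕ) : ℤ := -∏ j ∈ Finset.Icc 1 (i + 1), (-nicfE α j)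

/-- `d_n^- = (Σ_{i=1}^n t_i δ_{i-1} q_{i-1}) / (δ_{n-1} q_n)` for `γ_*` (so `t_i = λ_i`). -/
noncomputable def dminus (α : ℝ) (n : ℕ) : ℝ :=
  (∑ i ∈ Finset.Icc 1 n, (lamStar α i : ℝ) * (deltaSeq α (i - 1) : ℝ) * (qseq α (i - 1) : ℝ)) /
    ((deltaSeq α (n - 1) : ℝ) * (qseq α n : ℝ))

/-- `d_n^+ = (Σ_{i=n+1}^∞ t_i D_{i-1}) / D_{n-1}` for `γ_*` (so `t_i = λ_i`). -/
noncomputable def dplus (α : ℝ) (n : ℕ) : ℝ :=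
  (∑' k : ℕ, (lamStar α (n + 1 + k) : ℝ) * nicfD α (n + 1 + k)) / nicfD α n

/-- `d_n^-` for `γ_**` (so `t_i = λ'_i`). -/
noncomputable def dminus2 (α : ℝ) (n : ℕ) : ℝ :=
  (∑ i ∈ Finset.Icc 1 n, (lamStar2 α i : ℝ) * (deltaSeq α (i - 1) : ℝ) * (qseq α (i - 1) : ℝ)) /
    ((deltaSeq α (n - 1) : ℝ) * (qseq α n : ℝ))

/-- `d_n^+` for `γ_**` (so `t_i = λ'_i`). -/
noncomputable def dplus2 (α : ℝ) (n : ℕ) : ℝ :=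
  (∑' k : ℕ, (lamStar2 α (n + 1 + k) : ℝ) * nicfD α (n + 1 + k)) / nicfD α n

/-- `i ∈ S(γ_*)`: `|d_i^-| ≤ 1 - ᾱ_i` and `-(1-ε_{i+1}α_i) ≤ d_i^+ ≤ 1+ε_{i+1}α_i`. -/
def inS (α : ℝ) (i : ℕ) : Prop :=
  |dminus α i| ≤ 1 - abar α i ∧
    -(1 - (nicfE α (i + 1) : ℝ) * nicfT α i) ≤ dplus α i ∧
      dplus α i ≤ 1 + (nicfE α (i + 1) : ℝ) * nicfT α i

/-- `i ∈ S(γ_**)`. -/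
def inS2 (α : ℝ) (i : ℕ) : Prop :=
  |dminus2 α i| ≤ 1 - abar α i ∧
    -(1 - (nicfE α (i + 1) : ℝ) * nicfT α i) ≤ dplus2 α i ∧
      dplus2 α i ≤ 1 + (nicfE α (i + 1) : ℝ) * nicfT α i

/-- The remainders `γ_i` of the alpha-expansion of `γ`: `γ_0 = γ`,
`γ_{i+1} = {γ_i/α_i}`. -/
noncomputable def gSeq (α γ : ℝ) : ℕ → ℝ
  | 0 => γ
  | i + 1 => Int.fract (gSeq α γ i / nicfT α i)

/-- The coefficients `c_i` (for `i ≥ 1`) of the alpha-expansion of `γ`: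
`c_{i+1} = ⌊γ_i/α_i⌋`. -/
noncomputable def cCoef (α γ : ℝ) (i : ℕ) : ℤ := ⌊gSeq α γ (i - 1) / nicfT α (i - 1)⌋


/-!
A pair of integers `n, m` gives a point `(1 - 2 n, 2 (n α - γ - m))` of a grid in the plane, and
`M(α, γ)` is, up to the factor `4`, the limit inferior of the absolute value of the product of the
two coordinates. The continued fraction of `α` together with the expansion of `γ` produces a
sequence of bases of this grid, hence of cells whose four corners have the coordinates
`±1 ± ᾱ_k ± d_k⁻` and `±1 ± α_k ± d_k⁺` up to scaling.

If `M(α, γ) > ν / 4`, the products at the corners of late cells exceed `ν` (suitably normalised).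
Each late cell is then divided, that is, has one corner in each quadrant, and comparing the corners
of the `k`-th and `(k + 1)`-st cells gives `|t_k| < (1 - ν) a_k`. Conversely, the products at the
corners of divided cells control those at all grid points, so that a lower bound `ν` there gives
`M ≥ ν / 4`. The digits of `γ_*` alternate in sign along the odd partial quotients, so that the
deviations `d_k^±` are explicit enough to give `M(α, γ_*) ≥ (1 - 2 / (R_* - 1)) / 4 + R_*⁻³`.
The theorem is the first fact with `ν = 1 - 2 / (R_* - 1)`.
-/
open scoped Topology

section ApproximationConstant

variable {α γ ν : ℝ}

theorem two_mul_nint (x : ℝ) : 2 * nint x = |2 * (x - round x)| := by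
  rw [abs_mul, abs_two, nint]

theorem two_mul_nint_le (x : ℝ) (m : ℤ) : 2 * nint x ≤ |2 * (x - m)| := by
  rw [abs_mul, abs_two]
  exact mul_le_mul_of_nonneg_left (round_le x m) zero_le_two

theorem abs_two_mul_sub_one_le (x : ℝ) : |2 * x - 1| ≤ 2 * |x| + 1 := by
  simpa [abs_mul] using abs_sub (2 * x) 1

theorem two_mul_abs_le (x : ℝ) : 2 * |x| ≤ |2 * x - 1| + 1 := by
  simpa [abs_mul] using abs_add_le (2 * x - 1) 1

theorem tendsto_abs_intCast_cofinite : Tendsto (fun n : ℤ => |(n : ℝ)|) cofinite atTop :=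
  tendsto_norm_cocompact_atTop.comp Int.tendsto_coe_cofinite

theorem isBoundedUnder_ge_abs_mul_nint :
    IsBoundedUnder (· ≥ ·) cofinite fun n : ℤ => |(n : ℝ)| * nint (n * α - γ) :=
  isBoundedUnder_of ⟨0, fun _ => mul_nonneg (abs_nonneg _) (abs_nonneg _)⟩

theorem abs_mul_nint_le (n m : ℤ) : 4 * (|(n : ℝ)| * nint (n * α - γ)) ≤
    (|2 * (n : ℝ) - 1| + 1) * |2 * ((n : ℝ) * α - γ - m)| := by
  have hmul := mul_le_mul (two_mul_abs_le n) (two_mul_nint_le (n * α - γ) m)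
    (by rw [two_mul_nint]; positivity) (by positivity)
  linarith

theorem exists_pos_forall_lt_of_lt_Mval (hγ : ∀ n m : ℤ, (n : ℝ) * α - γ ≠ m)
    (hν : ν / 4 < Mval α γ) :
    ∃ δ > 0, ∀ n m : ℤ, |2 * ((n : ℝ) * α - γ - m)| < δ →
      ν < |2 * (n : ℝ) - 1| * |2 * ((n : ℝ) * α - γ - m)| := by
  obtain ⟨μ, hνμ, hμ⟩ := exists_between hν
  have hfin : {n : ℤ | ¬ μ < |(n : ℝ)| * nint (n * α - γ)}.Finite :=
    eventually_lt_of_lt_liminf hμ isBoundedUnder_ge_abs_mul_nint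
  have hgap : ∀ᶠ δ in 𝓝[>] (0 : ℝ), δ < 4 * μ - ν :=
    nhdsWithin_le_nhds (gt_mem_nhds (by linarith))
  have hexc : ∀ᶠ δ in 𝓝[>] (0 : ℝ), ∀ n ∈ {n : ℤ | ¬ μ < |(n : ℝ)| * nint (n * α - γ)},
      δ < 2 * nint (n * α - γ) :=
    (eventually_all_finite hfin).2 fun n _ =>
      nhdsWithin_le_nhds (gt_mem_nhds (mul_pos two_pos (abs_pos.2 (sub_ne_zero.2 (hγ n _)))))
  obtain ⟨δ, ⟨hδν, hδn⟩, hδ⟩ := ((hgap.and hexc).and self_mem_nhdsWithin).exists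
  refine ⟨δ, hδ, fun n m hnm => ?_⟩
  have hμn : μ < |(n : ℝ)| * nint (n * α - γ) := by
    by_contra hn
    linarith [hδn n hn, two_mul_nint_le (n * α - γ) m]
  linarith [abs_mul_nint_le (α := α) (γ := γ) n m]

theorem isCoboundedUnder_ge_abs_mul_nint {B : ℝ}
    (hB : ∀ L, ∃ n m : ℤ, L < |2 * (n : ℝ) - 1| ∧ |2 * ((n : ℝ) * α - γ - m)| ≤ B ∧
      |2 * (n : ℝ) - 1| * |2 * ((n : ℝ) * α - γ - m)| ≤ B) :
    IsCoboundedUnder (· ≥ ·) cofinite fun n : ℤ => |(n : ℝ)| * nint (n * α - γ) := by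
  refine IsCoboundedUnder.of_frequently_le (a := B) fun hlt => ?_
  obtain ⟨L, hL⟩ := (Set.Finite.image (fun n : ℤ => |2 * (n : ℝ) - 1|) hlt).bddAbove
  obtain ⟨n, m, hLn, hY, hXY⟩ := hB L
  refine hLn.not_ge (hL (Set.mem_image_of_mem _ (not_not.2 ?_)))
  have hB0 : 0 ≤ B := (abs_nonneg _).trans hY
  linarith [abs_mul_nint_le (α := α) (γ := γ) n m]

theorem div_four_le_Mval
    (hcob : IsCoboundedUnder (· ≥ ·) cofinite fun n : ℤ => |(n : ℝ)| * nint (n * α - γ)) {C : ℝ}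
    (hν : ∀ n m : ℤ, C < |2 * (n : ℝ) - 1| → |2 * ((n : ℝ) * α - γ - m)| ≤ 1 →
      ν ≤ |2 * (n : ℝ) - 1| * |2 * ((n : ℝ) * α - γ - m)|) :
    ν / 4 ≤ Mval α γ := by
  refine le_of_forall_lt fun μ hμ => ?_
  obtain ⟨κ, hμκ, hκ⟩ := exists_between hμ
  refine hμκ.trans_le (le_liminf_of_le hcob ?_)
  have hscale : Tendsto (fun n : ℤ => (ν - 4 * κ) * |(n : ℝ)|) cofinite atTop :=
    tendsto_abs_intCast_cofinite.const_mul_atTop (by linarith)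
  filter_upwards [tendsto_abs_intCast_cofinite.eventually_gt_atTop (C + 1),
    tendsto_abs_intCast_cofinite.eventually_ge_atTop 1,
    hscale.eventually_ge_atTop (2 * κ)] with n hnC hn1 hnκ
  have habs := two_mul_abs_le (n : ℝ)
  have hn := hν n (round (n * α - γ)) (by linarith)
    (by rw [abs_mul, abs_two]; linarith [abs_sub_round (n * α - γ)])
  rw [← two_mul_nint] at hn
  have hupper : ν ≤ (4 * |(n : ℝ)| + 2) * nint (n * α - γ) := by
    have hnint : 0 ≤ nint (n * α - γ) := abs_nonneg _
    linarith [mul_le_mul_of_nonneg_right (abs_two_mul_sub_one_le (n : ℝ)) hnint]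
  have hscaled : |(n : ℝ)| * ν ≤ (4 * |(n : ℝ)| + 2) * (|(n : ℝ)| * nint (n * α - γ)) := by
    linarith [mul_le_mul_of_nonneg_left hupper (abs_nonneg (n : ℝ))]
  exact le_of_mul_le_mul_left (a := 4 * |(n : ℝ)| + 2) (by linarith) (by positivity)

end ApproximationConstant

section ContinuedFraction

/-- `α k = 1/(a k + 1/(a (k+1) + ⋯))`: the `a k` are the partial quotients, all at least `2`, of a
regular continued fraction, and the `α k` are its tails. Indices start at `0`, so that `a k` is the
`a_{k+1}` of the NICF expansion. -/
structure RegularCF (a : ℕ → ℤ) (α : ℕ → ℝ) : Prop where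
  two_le : ∀ k, 2 ≤ a k
  pos : ∀ k, 0 < α k
  mul_add : ∀ k, α k * (a k + α (k + 1)) = 1

/-- The backward tail `ᾱ_k = q_{k-1}/q_k = 1/(a_{k-1} + 1/(a_{k-2} + ⋯ + 1/a_0))`. -/
noncomputable def backTail (a : ℕ → ℤ) : ℕ → ℝ
  | 0 => 0
  | k + 1 => (a k + backTail a k)⁻¹

/-- The backward deviation `d_k⁻` of the sequence `t`, given by `d_0⁻ = 0` and
`d_{k+1}⁻ = ᾱ_{k+1} (t_k - d_k⁻)`. -/
noncomputable def backDev (a t : ℕ → ℤ) : ℕ → ℝ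
  | 0 => 0
  | k + 1 => backTail a (k + 1) * (t k - backDev a t k)

variable {a t : ℕ → ℤ} {α T : ℕ → ℝ}

theorem backTail_nonneg (ha : ∀ k, 1 ≤ a k) : ∀ k, 0 ≤ backTail a k
  | 0 => le_rfl
  | k + 1 => inv_nonneg.2 <|
      add_nonneg (Int.cast_nonneg (by linarith [ha k])) (backTail_nonneg ha k)

theorem backTail_succ_mul (ha : ∀ k, 1 ≤ a k) (k : ℕ) :
    backTail a (k + 1) * (a k + backTail a k) = 1 := by
  have : (1 : ℝ) ≤ a k := by exact_mod_cast ha k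
  exact inv_mul_cancel₀ (by linarith [backTail_nonneg ha k])

theorem backTail_succ_pos (ha : ∀ k, 1 ≤ a k) (k : ℕ) : 0 < backTail a (k + 1) :=
  (backTail_nonneg ha _).lt_of_ne' (left_ne_zero_of_mul_eq_one (backTail_succ_mul ha k))

theorem backTail_succ_mul_le_one (ha : ∀ k, 1 ≤ a k) {k : ℕ} {c : ℝ} (hc : c ≤ a k) :
    backTail a (k + 1) * c ≤ 1 := by
  rw [← backTail_succ_mul ha k]
  exact mul_le_mul_of_nonneg_left (by linarith [backTail_nonneg ha k]) (backTail_nonneg ha _)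

theorem eventually_backTail_le_inv (ha : ∀ k, 1 ≤ a k) {N : ℝ} (hN : 0 < N)
    (haN : ∀ᶠ k in atTop, N ≤ a k) : ∀ᶠ k in atTop, backTail a k ≤ 1 / N := by
  rw [← map_add_atTop_eq_nat 1, eventually_map]
  filter_upwards [haN] with k hk
  exact (le_div_iff₀ hN).2 (backTail_succ_mul_le_one ha hk)

theorem backDev_neg (k : ℕ) : backDev a (-t) k = -backDev a t k := by
  induction k with
  | zero => simp [backDev]
  | succ k ih =>
    simp only [backDev, ih, Pi.neg_apply, Int.cast_neg]
    ring

namespace RegularCF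

variable (h : RegularCF a α)
include h

theorem one_le (k : ℕ) : 1 ≤ a k := one_le_two.trans (h.two_le k)

theorem mul_le_one {k : ℕ} {c : ℝ} (hc : c ≤ a k) : α k * c ≤ 1 := by
  rw [← h.mul_add k]
  exact mul_le_mul_of_nonneg_left (by linarith [h.pos (k + 1)]) (h.pos k).le

theorem le_half (k : ℕ) : α k ≤ 1 / 2 := by
  have := h.mul_le_one (c := 2) (by exact_mod_cast h.two_le k)
  linarith

theorem eventually_le_inv {N : ℝ} (hN : 0 < N) (haN : ∀ᶠ k in atTop, N ≤ a k) :
    ∀ᶠ k in atTop, α k ≤ 1 / N :=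
  haN.mono fun _ hk => (le_div_iff₀ hN).2 (h.mul_le_one hk)

theorem mul_one_add_mul_backTail_succ (k : ℕ) :
    α k * (1 + α (k + 1) * backTail a (k + 1)) = backTail a (k + 1) * (1 + α k * backTail a k) := by
  linear_combination backTail a (k + 1) * h.mul_add k - α k * backTail_succ_mul h.one_le k

end RegularCF

end ContinuedFraction

section GridOrbit

/-- The coordinates, along a regular continued fraction with partial quotients `a`, of a point of
the grid of all pairs of odd integers, shifted by the expansion `t`. -/
structure GridOrbit (a t Z : ℕ → ℤ) : Prop where
  odd : ∀ k, Odd (Z k)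
  step : ∀ k, Z (k + 2) = a k * Z (k + 1) + Z k - t k

/-- `T k = Σ_{j ≥ k} t_j α_k ⋯ α_j`, in the form of a recursion, is the forward deviation `d_k⁺` of
an expansion `t` whose digits have the parity of the partial quotients. The number expanded is
`(1 + α 0 + T 0) / 2`. -/
structure SymExpansion (a : ℕ → ℤ) (α : ℕ → ℝ) (t : ℕ → ℤ) (T : ℕ → ℝ) : Prop where
  even_sub : ∀ k, Even (a k - t k)
  step : ∀ k, T k = α k * (t k + T (k + 1))

/-- The linear form with value `1 - 2 n` at the grid point belonging to the integers `n, m`, in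
the `k`-th coordinates and up to a scalar. -/
noncomputable def backForm (a t Z : ℕ → ℤ) (k : ℕ) : ℝ :=
  -Z k + backTail a k * Z (k + 1) + backDev a t k

/-- The linear form with value `2 (n α - γ - m)` at the grid point belonging to the integers
`n, m`, in the `k`-th coordinates and up to a scalar. -/
def forwForm (α T : ℕ → ℝ) (Z : ℕ → ℤ) (k : ℕ) : ℝ := Z (k + 1) + α k * Z k - T k

variable {a t Z : ℕ → ℤ} {α T : ℕ → ℝ}

theorem SymExpansion.neg (hT : SymExpansion a α t T) : SymExpansion a α (-t) (-T) where
  even_sub k := by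
    rw [Pi.neg_apply, sub_neg_eq_add, Int.even_add]
    exact Int.even_sub.1 (hT.even_sub k)
  step k := by
    simp only [Pi.neg_apply, Int.cast_neg]
    linear_combination -hT.step k

/-- The grid orbit through the point `(u, v)` in the `0`-th coordinates. -/
def orbitFrom (a t : ℕ → ℤ) (u v : ℤ) : ℕ → ℤ
  | 0 => u
  | 1 => v
  | k + 2 => a k * orbitFrom a t u v (k + 1) + orbitFrom a t u v k - t k

theorem gridOrbit_orbitFrom (hat : ∀ k, Even (a k - t k)) {u v : ℤ} (hu : Odd u) (hv : Odd v) :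
    GridOrbit a t (orbitFrom a t u v) where
  odd k := by
    induction k using Nat.twoStepInduction with
    | zero => exact hu
    | one => exact hv
    | more k ihu ihv =>
      obtain ⟨i, hi⟩ := ihu
      obtain ⟨j, hj⟩ := ihv
      obtain ⟨l, hl⟩ := hat k
      refine ⟨a k * j + i + l, ?_⟩
      rw [orbitFrom, hi, hj]
      linear_combination hl
  step _ := rfl

theorem exists_gridOrbit (hat : ∀ k, Even (a k - t k)) (k : ℕ) {u v : ℤ} (hu : Odd u)
    (hv : Odd v) : ∃ Z, GridOrbit a t Z ∧ Z k = u ∧ Z (k + 1) = v := by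
  induction k generalizing u v with
  | zero => exact ⟨orbitFrom a t u v, gridOrbit_orbitFrom hat hu hv, rfl, rfl⟩
  | succ k ih =>
    have hprev : Odd (v - a k * u + t k) := by
      obtain ⟨i, rfl⟩ := hu
      obtain ⟨j, rfl⟩ := hv
      obtain ⟨l, hl⟩ := hat k
      exact ⟨j - a k * i - l, by linear_combination -hl⟩
    obtain ⟨Z, hZ, hk, hk'⟩ := ih hprev hu
    exact ⟨Z, hZ, hk', by rw [hZ.step, hk, hk']; ring⟩

theorem SymExpansion.forwForm_eq_mul (hα : ∀ k, α k * (a k + α (k + 1)) = 1)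
    (hT : SymExpansion a α t T) (hZ : GridOrbit a t Z) (k : ℕ) :
    forwForm α T Z k = α k * forwForm α T Z (k + 1) := by
  have hstep : (Z (k + 2) : ℝ) = a k * Z (k + 1) + Z k - t k := by exact_mod_cast hZ.step k
  simp only [forwForm]
  rw [hstep]
  linear_combination -Z (k + 1) * hα k - hT.step k

namespace GridOrbit

variable (hZ : GridOrbit a t Z)
include hZ

theorem neg : GridOrbit a (-t) (-Z) where
  odd k := (hZ.odd k).neg
  step k := by
    simp only [Pi.neg_apply]
    rw [hZ.step]
    ring

theorem ne_zero (k : ℕ) : Z k ≠ 0 := fun h => by simpa [h] using hZ.odd k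

theorem backForm_succ (ha : ∀ k, 1 ≤ a k) (k : ℕ) :
    backForm a t Z (k + 1) = -backTail a (k + 1) * backForm a t Z k := by
  have hstep : (Z (k + 2) : ℝ) = a k * Z (k + 1) + Z k - t k := by exact_mod_cast hZ.step k
  simp only [backForm, backDev]
  rw [hstep]
  linear_combination Z (k + 1) * backTail_succ_mul ha k

theorem abs_backForm (ha : ∀ k, 1 ≤ a k) (k : ℕ) :
    |backForm a t Z k| = (∏ j ∈ range k, backTail a (j + 1)) * |backForm a t Z 0| := by
  induction k with
  | zero => simp
  | succ k ih =>
    rw [hZ.backForm_succ ha, abs_mul, abs_neg, abs_of_nonneg (backTail_nonneg ha _), ih,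
      prod_range_succ]
    ring

variable (h : RegularCF a α) (hT : SymExpansion a α t T)
include h hT

theorem abs_forwForm_zero (k : ℕ) :
    |forwForm α T Z 0| = (∏ j ∈ range k, α j) * |forwForm α T Z k| := by
  induction k with
  | zero => simp
  | succ k ih =>
    rw [ih, hT.forwForm_eq_mul h.mul_add hZ k, abs_mul, abs_of_pos (h.pos k), prod_range_succ]
    ring

theorem abs_forwForm_zero_le (k : ℕ) :
    |forwForm α T Z 0| ≤ (1 / 2) ^ k * |forwForm α T Z k| := by
  rw [hZ.abs_forwForm_zero h hT k]
  refine mul_le_mul_of_nonneg_right ?_ (abs_nonneg _)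
  simpa using prod_le_prod (fun j _ => (h.pos j).le) fun j (_ : j ∈ range k) => h.le_half j

theorem abs_backForm_mul_abs_forwForm (k : ℕ) :
    |backForm a t Z 0| * |forwForm α T Z 0| * (1 + α k * backTail a k) =
      |backForm a t Z k| * |forwForm α T Z k| := by
  induction k with
  | zero => simp [backTail]
  | succ k ih =>
    have hpos := (h.pos k).ne'
    apply mul_left_cancel₀ hpos
    rw [hT.forwForm_eq_mul h.mul_add hZ k, abs_mul, abs_of_pos (h.pos k)] at ih
    rw [hZ.backForm_succ h.one_le, abs_mul, abs_neg, abs_of_nonneg (backTail_nonneg h.one_le _)]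
    linear_combination |backForm a t Z 0| * |forwForm α T Z 0| * h.mul_one_add_mul_backTail_succ k
      + backTail a (k + 1) * ih

end GridOrbit

theorem GridOrbit.exists_int (hZ : GridOrbit a t Z) (α T : ℕ → ℝ) : ∃ n m : ℤ,
    |backForm a t Z 0| = |2 * (n : ℝ) - 1| ∧
      forwForm α T Z 0 = 2 * (n * α 0 - (1 + α 0 + T 0) / 2 - m) := by
  obtain ⟨i, hi⟩ := hZ.odd 0
  obtain ⟨j, hj⟩ := hZ.odd 1
  refine ⟨i + 1, -j - 1, ?_, ?_⟩
  · rw [← abs_neg]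
    simp only [backForm, backTail, backDev, hi]
    push_cast
    ring_nf
  · simp only [forwForm, hi, hj]
    push_cast
    ring

theorem exists_gridOrbit_of_int (hat : ∀ k, Even (a k - t k)) (α T : ℕ → ℝ) (n m : ℤ) :
    ∃ Z, GridOrbit a t Z ∧ |backForm a t Z 0| = |2 * (n : ℝ) - 1| ∧
      forwForm α T Z 0 = 2 * (n * α 0 - (1 + α 0 + T 0) / 2 - m) := by
  refine ⟨orbitFrom a t (2 * n - 1) (-2 * m - 1),
    gridOrbit_orbitFrom hat ⟨n - 1, by ring⟩ ⟨-m - 1, by ring⟩, ?_, ?_⟩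
  · rw [← abs_neg]
    simp [backForm, backTail, backDev, orbitFrom]
  · simp only [forwForm, orbitFrom]
    push_cast
    ring

end GridOrbit

section DividedCell

/-- The grid of all `(-u + β v + d, v + α u - T)` with `u, v` odd is divided at the cell whose
corners have `u, v = ±1`: these four corners lie in the four closed quadrants, and at each of them
the product of the coordinates has absolute value at least `ν (1 + α β)`. -/
structure DividedCell (ν α β d T : ℝ) : Prop where
  abs_back_le : |d| ≤ 1 - β
  abs_forw_le : |T| ≤ 1 - α
  top_left : ν * (1 + α * β) ≤ (1 + β + d) * (1 - α - T)
  top_right : ν * (1 + α * β) ≤ (1 - β - d) * (1 + α - T)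
  bot_right : ν * (1 + α * β) ≤ (1 + β - d) * (1 - α + T)
  bot_left : ν * (1 + α * β) ≤ (1 - β + d) * (1 + α + T)

variable {ν α β d T : ℝ}

theorem DividedCell.neg (h : DividedCell ν α β d T) : DividedCell ν α β (-d) (-T) where
  abs_back_le := by rw [abs_neg]; exact h.abs_back_le
  abs_forw_le := by rw [abs_neg]; exact h.abs_forw_le
  top_left := by simpa [sub_eq_add_neg] using h.bot_right
  top_right := by simpa [sub_eq_add_neg] using h.bot_left
  bot_right := by simpa [sub_eq_add_neg] using h.top_left
  bot_left := by simpa [sub_eq_add_neg] using h.top_right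

theorem abs_le_of_half_le_abs_mul_abs (hα0 : 0 ≤ α) (hα : α ≤ 1 / 4) (hβ : β ≤ 1 / 4)
    (hd : |d| ≤ 1 + β) (hTlo : -(1 + α) ≤ T) (hThi : T ≤ 1 - α)
    (h_tl : 1 / 2 ≤ |1 + β + d| * |1 - α - T|) (h_tr : 1 / 2 ≤ |1 - β - d| * |1 + α - T|)
    (h_br : 1 / 2 ≤ |1 + β - d| * |1 - α + T|) (h_bl : 1 / 2 ≤ |1 - β + d| * |1 + α + T|) :
    |d| ≤ 1 - β ∧ |T| ≤ 1 - α := by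
  obtain ⟨hdlo, hdhi⟩ := abs_le.1 hd
  rw [abs_of_nonneg (by linarith : 0 ≤ 1 + β + d),
    abs_of_nonneg (by linarith : 0 ≤ 1 - α - T)] at h_tl
  rw [abs_of_nonneg (by linarith : 0 ≤ 1 + β - d)] at h_br
  rw [abs_of_nonneg (by linarith : 0 ≤ 1 + α + T)] at h_bl
  have hdlo' : -(1 - β) ≤ d := by
    by_contra! hlt
    rw [abs_of_neg (by linarith)] at h_bl
    nlinarith
  have hdhi' : d ≤ 1 - β := by
    by_contra! hlt
    rw [abs_of_neg (by linarith : 1 - β - d < 0),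
      abs_of_nonneg (by linarith : 0 ≤ 1 + α - T)] at h_tr
    have hT : |1 - α + T| ≤ 1 := abs_le.2 ⟨by linarith, by nlinarith⟩
    nlinarith [abs_nonneg (1 - α + T)]
  have hTlo' : -(1 - α) ≤ T := by
    by_contra! hlt
    rw [abs_of_nonneg (by linarith)] at h_bl
    rw [abs_of_neg (by linarith)] at h_br
    nlinarith
  exact ⟨abs_le.2 ⟨hdlo', hdhi'⟩, abs_le.2 ⟨hTlo', hThi⟩⟩

theorem DividedCell.of_forall_units (hα0 : 0 ≤ α) (hα : α ≤ 1 / 4) (hβ0 : 0 ≤ β)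
    (hβ : β ≤ 1 / 4) (hν : 1 / 2 ≤ ν) (hd : |d| ≤ 1 + β) (hTlo : -(1 + α) ≤ T) (hThi : T ≤ 1 - α)
    (hle : ∀ u v : ℤˣ,
      ν * (1 + α * β) ≤ |-(u : ℤ) + β * (v : ℤ) + d| * |(v : ℤ) + α * (u : ℤ) - T|) :
    DividedCell ν α β d T := by
  have hhalf : 1 / 2 ≤ ν * (1 + α * β) := by nlinarith [mul_nonneg hα0 hβ0]
  have h_tl : ν * (1 + α * β) ≤ |1 + β + d| * |1 - α - T| := by
    convert hle (-1) 1 using 3 <;> push_cast <;> ring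
  have h_tr : ν * (1 + α * β) ≤ |1 - β - d| * |1 + α - T| := by
    rw [← abs_neg (1 - β - d)]
    convert hle 1 1 using 3 <;> push_cast <;> ring
  have h_br : ν * (1 + α * β) ≤ |1 + β - d| * |1 - α + T| := by
    rw [← abs_neg (1 + β - d), ← abs_neg (1 - α + T)]
    convert hle 1 (-1) using 3 <;> push_cast <;> ring
  have h_bl : ν * (1 + α * β) ≤ |1 - β + d| * |1 + α + T| := by
    rw [← abs_neg (1 + α + T)]
    convert hle (-1) (-1) using 3 <;> push_cast <;> ring
  obtain ⟨hd', hT'⟩ := abs_le_of_half_le_abs_mul_abs hα0 hα hβ hd hTlo hThi (hhalf.trans h_tl)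
    (hhalf.trans h_tr) (hhalf.trans h_br) (hhalf.trans h_bl)
  obtain ⟨hdlo, hdhi⟩ := abs_le.1 hd'
  obtain ⟨hTlo, hThi⟩ := abs_le.1 hT'
  rw [abs_of_nonneg, abs_of_nonneg] at h_tl h_tr h_br h_bl
  · exact ⟨hd', hT', h_tl, h_tr, h_br, h_bl⟩
  all_goals linarith

section Consecutive

variable {α' β' T' t : ℝ} {a : ℝ}

theorem DividedCell.mul_le_sub (hν : 0 ≤ ν) (hα : α * (a + α') = 1) (hβ : β' * (a + β) = 1)
    (hT : T = α * (t + T')) (hβ0 : 0 ≤ β) (hα0 : 0 ≤ α') (ha : 0 ≤ a)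
    (h : DividedCell ν α β d T) (h' : DividedCell ν α' β' (β' * (t - d)) T') :
    ν * a ≤ a - t := by
  have htop : ν * (1 + α * β) ≤ 1 - T - α * (β + d) := by linarith [h.top_left, h.top_right]
  have hright : ν * (1 + α' * β') ≤ 1 - β' * (t - d) - β' * (α' - T') := by
    linarith [h'.top_right, h'.bot_right]
  have htop' : ν * (a + α' + β) ≤ a + α' - (t + T') - (β + d) := by
    linear_combination (a + α') * htop - (ν * β + (t + T') + (β + d)) * hα - (a + α') * hT
  have hright' : ν * (a + β + α') ≤ a + β - (t - d) - (α' - T') := by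
    linear_combination (a + β) * hright - (ν * α' + (t - d) + (α' - T')) * hβ
  have hmono : ν * a ≤ ν * (a + α' + β) := mul_le_mul_of_nonneg_left (by linarith) hν
  linarith

theorem DividedCell.abs_le_one_sub_mul (hν : 0 ≤ ν) (hα : α * (a + α') = 1)
    (hβ : β' * (a + β) = 1) (hT : T = α * (t + T')) (hβ0 : 0 ≤ β) (hα0 : 0 ≤ α') (ha : 0 ≤ a)
    (h : DividedCell ν α β d T) (h' : DividedCell ν α' β' (β' * (t - d)) T') :
    |t| ≤ (1 - ν) * a := by
  have hpos := h.mul_le_sub hν hα hβ hT hβ0 hα0 ha h'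
  have hneg := h.neg.mul_le_sub (t := -t) (T' := -T') hν hα hβ (by linear_combination -hT) hβ0 hα0
    ha (by convert h'.neg using 1; ring)
  exact abs_le.2 ⟨by linarith, by linarith⟩

end Consecutive

end DividedCell

section EventuallyDivided

variable {a t : ℕ → ℤ} {α T : ℕ → ℝ} {ν : ℝ}

theorem abs_unit_cast (u : ℤˣ) : |((u : ℤ) : ℝ)| = 1 := by
  rcases Int.units_eq_one_or u with rfl | rfl <;> simp

theorem odd_unit (u : ℤˣ) : Odd (u : ℤ) := by
  rcases Int.units_eq_one_or u with rfl | rfl <;> decide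

theorem tendsto_const_mul_half_pow (C : ℝ) :
    Tendsto (fun k : ℕ => (1 / 2) ^ k * C) atTop (𝓝 0) := by
  simpa using (tendsto_pow_atTop_nhds_zero_of_lt_one (by norm_num) one_half_lt_one).mul_const C

theorem SymExpansion.eventually_le_abs_mul_abs (h : RegularCF a α) (hT : SymExpansion a α t T)
    {B : ℝ} (hB : ∀ k, |T k| ≤ B) (hγ : ∀ n m : ℤ, (n : ℝ) * α 0 - (1 + α 0 + T 0) / 2 ≠ m)
    (hν : ν / 4 < Mval (α 0) ((1 + α 0 + T 0) / 2)) :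
    ∀ᶠ k in atTop, ∀ u v : ℤˣ, ν * (1 + α k * backTail a k) ≤
      |-(u : ℤ) + backTail a k * (v : ℤ) + backDev a t k| * |(v : ℤ) + α k * (u : ℤ) - T k| := by
  obtain ⟨δ, hδ, hforms⟩ := exists_pos_forall_lt_of_lt_Mval hγ hν
  filter_upwards [(tendsto_const_mul_half_pow (2 + B)).eventually_lt_const hδ] with k hk u v
  obtain ⟨Z, hZ, hu, hv⟩ := exists_gridOrbit hT.even_sub k (odd_unit u) (odd_unit v)
  obtain ⟨n, m, hX, hY⟩ := hZ.exists_int α T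
  have hYk : |forwForm α T Z k| ≤ 2 + B := by
    have hαu : |α k * ((u : ℤ) : ℝ)| ≤ 1 := by
      rw [abs_mul, abs_unit_cast, mul_one, abs_of_pos (h.pos k)]
      linarith [h.le_half k]
    rw [forwForm, hu, hv]
    linarith [abs_sub (((v : ℤ) : ℝ) + α k * ((u : ℤ) : ℝ)) (T k),
      abs_add_le ((v : ℤ) : ℝ) (α k * ((u : ℤ) : ℝ)), hB k, abs_unit_cast v]
  have hY0 : |forwForm α T Z 0| < δ := (hZ.abs_forwForm_zero_le h hT k).trans_lt
    ((mul_le_mul_of_nonneg_left hYk (by positivity)).trans_lt hk)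
  have hlt : ν < |backForm a t Z 0| * |forwForm α T Z 0| := by
    rw [hY] at hY0 ⊢
    rw [hX]
    exact hforms n m hY0
  have hpos : 0 ≤ 1 + α k * backTail a k := by
    have := mul_nonneg (h.pos k).le (backTail_nonneg h.one_le k)
    linarith
  have hmul := mul_le_mul_of_nonneg_right hlt.le hpos
  rwa [hZ.abs_backForm_mul_abs_forwForm h hT k, backForm, forwForm, hu, hv] at hmul

end EventuallyDivided

section AlphaExpansion

/-- The expansion `g 0 = Σ_k c_k α_0 ⋯ α_k` of a number in `[0, 1)` with respect to the tails of a
regular continued fraction; `g k` is its `k`-th remainder. -/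
structure AlphaExpansion (c : ℕ → ℤ) (α g : ℕ → ℝ) : Prop where
  nonneg : ∀ k, 0 ≤ g k
  lt_one : ∀ k, g k < 1
  step : ∀ k, g k = α k * (c k + g (k + 1))

variable {a c : ℕ → ℤ} {α g : ℕ → ℝ} {ν : ℝ}

namespace AlphaExpansion

theorem symExpansion (hg : AlphaExpansion c α g) (hα : ∀ k, α k * (a k + α (k + 1)) = 1) :
    SymExpansion a α (fun k => 2 * c k - a k) (fun k => 2 * g k - 1 - α k) where
  even_sub k := ⟨a k - c k, by ring⟩
  step k := by
    push_cast
    linear_combination 2 * hg.step k + hα k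

variable (h : RegularCF a α) (hg : AlphaExpansion c α g)
include h hg

theorem digit_nonneg (k : ℕ) : 0 ≤ c k := by
  have hsum : 0 ≤ c k + g (k + 1) :=
    nonneg_of_mul_nonneg_right (hg.step k ▸ hg.nonneg k) (h.pos k)
  have hlt : (-1 : ℝ) < c k := by linarith [hg.lt_one (k + 1)]
  exact Int.le_of_sub_one_lt (by exact_mod_cast hlt)

theorem digit_le (k : ℕ) : c k ≤ a k := by
  have hsum : c k + g (k + 1) < a k + α (k + 1) := by
    refine lt_of_mul_lt_mul_left ?_ (h.pos k).le
    rw [← hg.step k, h.mul_add k]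
    exact hg.lt_one k
  have hlt : (c k : ℝ) < a k + 1 := by linarith [hg.nonneg (k + 1), h.le_half (k + 1)]
  exact Int.lt_add_one_iff.1 (by exact_mod_cast hlt)

theorem abs_backDev_le (k : ℕ) : |backDev a (fun k => 2 * c k - a k) k| ≤ 1 + backTail a k := by
  induction k with
  | zero => simp [backDev, backTail]
  | succ k ih =>
    have hβ := backTail_succ_mul h.one_le k
    have hβ0 := backTail_nonneg h.one_le (k + 1)
    have hc0 : (0 : ℝ) ≤ c k := by exact_mod_cast hg.digit_nonneg h k
    have hca : (c k : ℝ) ≤ a k := by exact_mod_cast hg.digit_le h k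
    obtain ⟨hlo, hhi⟩ := abs_le.1 ih
    rw [backDev, abs_le]
    push_cast
    constructor
    · nlinarith
    · nlinarith

theorem eventually_dividedCell (ha : ∀ᶠ k in atTop, 4 ≤ a k)
    (hγ : ∀ n m : ℤ, (n : ℝ) * α 0 - g 0 ≠ m) (hν : 1 / 2 ≤ ν)
    (hM : ν / 4 < Mval (α 0) (g 0)) :
    ∀ᶠ k in atTop, DividedCell ν (α k) (backTail a k) (backDev a (fun k => 2 * c k - a k) k)
      (2 * g k - 1 - α k) := by
  have hg0 : (1 + α 0 + (2 * g 0 - 1 - α 0)) / 2 = g 0 := by ring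
  have hT : ∀ k, |2 * g k - 1 - α k| ≤ 2 := fun k => abs_le.2
    ⟨by linarith [hg.nonneg k, h.le_half k], by linarith [hg.lt_one k, h.pos k]⟩
  filter_upwards [(hg.symExpansion h.mul_add).eventually_le_abs_mul_abs h hT
      (by rwa [hg0]) (ν := ν) (by rwa [hg0]), h.eventually_le_inv four_pos (by exact_mod_cast ha),
    eventually_backTail_le_inv h.one_le four_pos (by exact_mod_cast ha)] with k hk hα hβ
  exact .of_forall_units (h.pos k).le (by linarith) (backTail_nonneg h.one_le k) (by linarith) hν
    (hg.abs_backDev_le h k) (by linarith [hg.nonneg k]) (by linarith [hg.lt_one k]) hk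

theorem eventually_abs_digit_lt (ha : ∀ᶠ k in atTop, 4 ≤ a k)
    (hγ : ∀ n m : ℤ, (n : ℝ) * α 0 - g 0 ≠ m) (hν : 1 / 2 ≤ ν)
    (hM : ν / 4 < Mval (α 0) (g 0)) :
    ∀ᶠ k in atTop, ((|2 * c k - a k| : ℤ) : ℝ) < (1 - ν) * a k := by
  obtain ⟨μ, hνμ, hμ⟩ := exists_between hM
  have hcell := hg.eventually_dividedCell h ha hγ (ν := 4 * μ) (by linarith) (by linarith)
  filter_upwards [hcell, (tendsto_add_atTop_nat 1).eventually hcell] with k hk hk'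
  have ha0 : (0 : ℝ) < a k := by exact_mod_cast h.one_le k
  have hle := hk.abs_le_one_sub_mul (by linarith) (h.mul_add k) (backTail_succ_mul h.one_le k)
    ((hg.symExpansion h.mul_add).step k) (backTail_nonneg h.one_le k) (h.pos _).le ha0.le hk'
  rw [Int.cast_abs]
  refine hle.trans_lt (mul_lt_mul_of_pos_right (by linarith) ha0)

end AlphaExpansion

end AlphaExpansion

section LowerBound

theorem le_add_mul_sub_of_le_endpoints {m lo hi x A B α : ℝ} (hα : 0 ≤ α) (hlo : lo ≤ x)
    (hhi : x ≤ hi) (hmlo : m ≤ (lo + A) * (B - α * lo)) (hmhi : m ≤ (hi + A) * (B - α * hi)) :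
    m ≤ (x + A) * (B - α * x) := by
  rcases hhi.eq_or_lt with rfl | hlt
  · exact hmhi
  have hgap : 0 < hi - lo := by linarith
  refine le_of_mul_le_mul_left ?_ hgap
  have hconcave : 0 ≤ α * ((x - lo) * (hi - x) * (hi - lo)) := by
    have := sub_nonneg.2 hlo
    have := sub_nonneg.2 hhi
    positivity
  linarith [mul_le_mul_of_nonneg_left hmlo (sub_nonneg.2 hhi),
    mul_le_mul_of_nonneg_left hmhi (sub_nonneg.2 hlo)]

/-- The product of the two forms is concave in `p` once `p + w` is fixed, and at the two ends of
the range it reduces to a corner of one of the two cells. -/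
theorem DividedCell.le_mul_of_add_eq {ν α β d T α' β' T' a t p u w : ℝ}
    (hα : α * (a + α') = 1) (hβ : β' * (a + β) = 1) (hT : T = α * (t + T'))
    (hα0 : 0 ≤ α) (hα0' : 0 ≤ α') (hβ0 : 0 ≤ β) (hβ0' : 0 < β')
    (h : DividedCell ν α β d T) (h' : DividedCell ν α' β' (β' * (t - d)) T')
    (hp : 1 ≤ p) (hu : 1 ≤ u) (hw : 1 ≤ w) (hpw : p + w = a * u - t) :
    ν * (1 + α * β) ≤ (p + β * u + d) * (u - α * p - T) := by
  obtain ⟨hdlo, -⟩ := abs_le.1 h.abs_back_le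
  obtain ⟨-, hThi⟩ := abs_le.1 h.abs_forw_le
  obtain ⟨-, hdhi'⟩ := abs_le.1 h'.abs_back_le
  obtain ⟨-, hThi'⟩ := abs_le.1 h'.abs_forw_le
  have hlo : ν * (1 + α * β) ≤ (1 + (β * u + d)) * (u - T - α * 1) :=
    h.top_left.trans (mul_le_mul (by nlinarith) (by linarith) (by linarith) (by nlinarith))
  have hnext : ν * (1 + α' * β') ≤ (u - β' - β' * (t - d)) * (1 + α' * u - T') :=
    h'.top_right.trans (mul_le_mul (by linarith) (by nlinarith) (by linarith) (by linarith))
  have hhi : ν * (1 + α * β) ≤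
      ((a * u - t - 1) + (β * u + d)) * (u - T - α * (a * u - t - 1)) := by
    have hback : (a * u - t - 1) + (β * u + d) = (a + β) * (u - β' - β' * (t - d)) := by
      linear_combination (1 + (t - d)) * hβ
    have hforw : u - T - α * (a * u - t - 1) = α * (1 + α' * u - T') := by
      linear_combination -u * hα - hT
    have hscale : ν * (1 + α * β) = α * (a + β) * (ν * (1 + α' * β')) := by
      linear_combination -ν * hα - ν * α * α' * hβ
    rw [hback, hforw, hscale]
    have hpos : 0 ≤ α * (a + β) := mul_nonneg hα0 (by nlinarith)
    linarith [mul_le_mul_of_nonneg_left hnext hpos]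
  have := le_add_mul_sub_of_le_endpoints hα0 hp (by linarith) hlo hhi
  linarith

variable {a t Z : ℕ → ℤ} {α T : ℕ → ℝ} {ν : ℝ}

theorem abs_lt_abs_of_alternating {a t x y z : ℤ} (ht : |t| < a) (hx : x = a * y + z - t)
    (hzy : z * y < 0) (hyx : y * x < 0) : |x| < |z| := by
  have ht' := abs_lt.1 ht
  rcases lt_trichotomy y 0 with hy | rfl | hy
  · rw [abs_of_pos (pos_of_mul_neg_right hyx hy.le), abs_of_pos (pos_of_mul_neg_left hzy hy.le)]
    nlinarith
  · simp at hyx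
  · rw [abs_of_neg (neg_of_mul_neg_right hyx hy.le), abs_of_neg (neg_of_mul_neg_left hzy hy.le)]
    nlinarith

theorem backForm_neg (k : ℕ) : backForm a (-t) (-Z) k = -backForm a t Z k := by
  simp only [backForm, backDev_neg, Pi.neg_apply, Int.cast_neg]
  ring

theorem forwForm_neg (k : ℕ) : forwForm α (-T) (-Z) k = -forwForm α T Z k := by
  simp only [forwForm, Pi.neg_apply, Int.cast_neg]
  ring

namespace GridOrbit

variable (hZ : GridOrbit a t Z)
include hZ

theorem exists_turn {K : ℕ} (ht : ∀ k ≥ K, |t k| < a k) (hK : Z K * Z (K + 1) < 0) :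
    ∃ k ≥ K, Z k * Z (k + 1) < 0 ∧ 0 < Z (k + 1) * Z (k + 2) := by
  by_contra! hno
  have halt : ∀ i, Z (K + i) * Z (K + i + 1) < 0 := by
    intro i
    induction i with
    | zero => exact hK
    | succ i ih =>
      exact (hno (K + i) (by lia) ih).lt_of_ne (mul_ne_zero (hZ.ne_zero _) (hZ.ne_zero _))
  refine not_strictAnti_of_wellFoundedLT (fun i => (Z (K + 2 * i)).natAbs)
    (strictAnti_nat_of_succ_lt fun i => ?_)
  have hlt := abs_lt_abs_of_alternating (ht (K + 2 * i) (by lia)) (hZ.step _) (halt (2 * i))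
    (halt (2 * i + 1))
  rw [Int.abs_eq_natAbs, Int.abs_eq_natAbs] at hlt
  exact_mod_cast hlt

omit hZ in
theorem abs_add_mul_abs_le (hα : ∀ k, 0 ≤ α k) {k : ℕ} (hk : 0 ≤ Z k * Z (k + 1)) :
    |(Z (k + 1) : ℝ)| + α k * |(Z k : ℝ)| ≤ |forwForm α T Z k| + |T k| := by
  have hsign : 0 ≤ (Z (k + 1) : ℝ) ∧ 0 ≤ α k * Z k ∨ (Z (k + 1) : ℝ) ≤ 0 ∧ α k * Z k ≤ 0 := by
    rcases mul_nonneg_iff.1 hk with ⟨h0, h1⟩ | ⟨h0, h1⟩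
    · exact .inl ⟨by exact_mod_cast h1, mul_nonneg (hα k) (by exact_mod_cast h0)⟩
    · exact .inr ⟨by exact_mod_cast h1,
        mul_nonpos_of_nonneg_of_nonpos (hα k) (by exact_mod_cast h0)⟩
  calc |(Z (k + 1) : ℝ)| + α k * |(Z k : ℝ)| = |Z (k + 1) + α k * Z k| := by
        rw [abs_add_eq_add_abs_iff _ _ |>.2 hsign, abs_mul, abs_of_nonneg (hα k)]
    _ = |forwForm α T Z k + T k| := by rw [forwForm, sub_add_cancel]
    _ ≤ |forwForm α T Z k| + |T k| := abs_add_le _ _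

omit hZ in
theorem abs_backForm_le (ha : ∀ k, 1 ≤ a k) (k : ℕ) : |backForm a t Z k| ≤
    |(Z k : ℝ)| + backTail a k * |(Z (k + 1) : ℝ)| + |backDev a t k| := by
  have h_add₁ := abs_add_le (-(Z k : ℝ) + backTail a k * Z (k + 1)) (backDev a t k)
  have h_add₂ := abs_add_le (-(Z k : ℝ)) (backTail a k * Z (k + 1))
  rw [abs_neg, abs_mul, abs_of_nonneg (backTail_nonneg ha k)] at h_add₂
  exact h_add₁.trans (by linarith)

variable (h : RegularCF a α) (hT : SymExpansion a α t T)
include h hT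

theorem le_abs_mul_abs_of_turn_of_pos {k : ℕ}
    (hcell : DividedCell ν (α k) (backTail a k) (backDev a t k) (T k))
    (hcell' : DividedCell ν (α (k + 1)) (backTail a (k + 1)) (backDev a t (k + 1)) (T (k + 1)))
    (hpos : 0 < Z (k + 1)) (hk : Z k * Z (k + 1) < 0) (hk' : 0 < Z (k + 1) * Z (k + 2)) :
    ν ≤ |backForm a t Z 0| * |forwForm α T Z 0| := by
  have hp : (1 : ℝ) ≤ -Z k := by
    have := neg_of_mul_neg_left hk hpos.le
    exact_mod_cast (by lia : 1 ≤ -Z k)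
  have hu : (1 : ℝ) ≤ Z (k + 1) := by exact_mod_cast hpos
  have hw : (1 : ℝ) ≤ Z (k + 2) := by exact_mod_cast pos_of_mul_pos_right hk' hpos.le
  have hstep : (Z (k + 2) : ℝ) = a k * Z (k + 1) + Z k - t k := by exact_mod_cast hZ.step k
  have hprod := hcell.le_mul_of_add_eq (h.mul_add k) (backTail_succ_mul h.one_le k) (hT.step k)
    (h.pos k).le (h.pos _).le (backTail_nonneg h.one_le k) (backTail_succ_pos h.one_le k) hcell'
    hp hu hw (by linarith)
  have hscale : 0 < 1 + α k * backTail a k := by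
    have := mul_nonneg (h.pos k).le (backTail_nonneg h.one_le k)
    linarith
  refine le_of_mul_le_mul_right ?_ hscale
  rw [hZ.abs_backForm_mul_abs_forwForm h hT k, ← abs_mul]
  refine (hprod.trans_eq ?_).trans (le_abs_self _)
  simp only [backForm, forwForm]
  ring

theorem le_abs_mul_abs_of_turn {k : ℕ}
    (hcell : DividedCell ν (α k) (backTail a k) (backDev a t k) (T k))
    (hcell' : DividedCell ν (α (k + 1)) (backTail a (k + 1)) (backDev a t (k + 1)) (T (k + 1)))
    (hk : Z k * Z (k + 1) < 0) (hk' : 0 < Z (k + 1) * Z (k + 2)) :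
    ν ≤ |backForm a t Z 0| * |forwForm α T Z 0| := by
  rcases (hZ.ne_zero (k + 1)).lt_or_gt with hneg | hpos
  · have := hZ.neg.le_abs_mul_abs_of_turn_of_pos h hT.neg
      (by rw [backDev_neg]; exact hcell.neg) (by rw [backDev_neg]; exact hcell'.neg)
      (neg_pos.2 hneg) (by simpa using hk) (by simpa using hk')
    rwa [backForm_neg, forwForm_neg, abs_neg, abs_neg] at this
  · exact hZ.le_abs_mul_abs_of_turn_of_pos h hT hcell hcell' hpos hk hk'

omit hZ in
theorem exists_forall_mul_neg (K : ℕ) : ∃ C, ∀ Z, GridOrbit a t Z → C < |backForm a t Z 0| →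
    |forwForm α T Z 0| ≤ 1 → Z K * Z (K + 1) < 0 := by
  have hA : 0 < ∏ j ∈ range K, α j := prod_pos fun j _ => h.pos j
  have hB : 0 < ∏ j ∈ range K, backTail a (j + 1) :=
    prod_pos fun j _ => backTail_succ_pos h.one_le j
  set F := 1 / (∏ j ∈ range K, α j) + |T K|
  refine ⟨(F / α K + backTail a K * F + |backDev a t K|) / ∏ j ∈ range K, backTail a (j + 1),
    fun Z hZ hX hY => ?_⟩
  by_contra! hsame
  rw [hZ.abs_forwForm_zero h hT K, ← le_div_iff₀' hA] at hY
  rw [div_lt_iff₀' hB, ← hZ.abs_backForm h.one_le K] at hX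
  have hsum : |(Z (K + 1) : ℝ)| + α K * |(Z K : ℝ)| ≤ F :=
    (abs_add_mul_abs_le (fun k => (h.pos k).le) hsame).trans (add_le_add_left hY _)
  have hαZ : 0 ≤ α K * |(Z K : ℝ)| := mul_nonneg (h.pos K).le (abs_nonneg _)
  have hZK : |(Z K : ℝ)| ≤ F / α K := by
    rw [le_div_iff₀' (h.pos K)]
    linarith [abs_nonneg (Z (K + 1) : ℝ)]
  have hZK' : backTail a K * |(Z (K + 1) : ℝ)| ≤ backTail a K * F :=
    mul_le_mul_of_nonneg_left (by linarith) (backTail_nonneg h.one_le K)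
  linarith [abs_backForm_le (t := t) (Z := Z) h.one_le K]

end GridOrbit

theorem DividedCell.exists_gridOrbit (h : RegularCF a α) (hT : SymExpansion a α t T) {k : ℕ}
    (hcell : DividedCell ν (α k) (backTail a k) (backDev a t k) (T k)) :
    ∃ Z, GridOrbit a t Z ∧ ν ≤ |backForm a t Z 0| * |forwForm α T Z 0| ∧
      |backForm a t Z 0| * |forwForm α T Z 0| ≤ 4 ∧ |forwForm α T Z 0| ≤ (1 / 2) ^ k * 2 := by
  obtain ⟨Z, hZ, hu, hv⟩ := _root_.exists_gridOrbit hT.even_sub k odd_neg_one odd_one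
  obtain ⟨hdlo, hdhi⟩ := abs_le.1 hcell.abs_back_le
  obtain ⟨hTlo, hThi⟩ := abs_le.1 hcell.abs_forw_le
  have hα0 := h.pos k
  have hβ0 := backTail_nonneg h.one_le k
  have hscale : 1 ≤ 1 + α k * backTail a k := le_add_of_nonneg_right (mul_nonneg hα0.le hβ0)
  have hX : |backForm a t Z k| = 1 + backTail a k + backDev a t k := by
    rw [backForm, hu, hv, Int.cast_neg, Int.cast_one, neg_neg, mul_one, abs_of_nonneg (by linarith)]
  have hY : |forwForm α T Z k| = 1 - α k - T k := by
    rw [forwForm, hu, hv, Int.cast_neg, Int.cast_one, mul_neg_one, ← sub_eq_add_neg,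
      abs_of_nonneg (by linarith)]
  have hXY := hZ.abs_backForm_mul_abs_forwForm h hT k
  rw [hX, hY] at hXY
  refine ⟨Z, hZ, le_of_mul_le_mul_right (hcell.top_left.trans_eq hXY.symm) (by linarith), ?_, ?_⟩
  · calc |backForm a t Z 0| * |forwForm α T Z 0|
        ≤ |backForm a t Z 0| * |forwForm α T Z 0| * (1 + α k * backTail a k) :=
          le_mul_of_one_le_right (by positivity) hscale
      _ = (1 + backTail a k + backDev a t k) * (1 - α k - T k) := hXY
      _ ≤ 2 * 2 := mul_le_mul (by linarith) (by linarith) (by linarith) zero_le_two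
      _ = 4 := by norm_num
  · refine (hZ.abs_forwForm_zero_le h hT k).trans (mul_le_mul_of_nonneg_left ?_ (by positivity))
    linarith

theorem SymExpansion.isCoboundedUnder (h : RegularCF a α) (hT : SymExpansion a α t T) (hν : 0 < ν)
    (hcell : ∀ᶠ k in atTop, DividedCell ν (α k) (backTail a k) (backDev a t k) (T k)) :
    IsCoboundedUnder (· ≥ ·) cofinite
      fun n : ℤ => |(n : ℝ)| * nint (n * α 0 - (1 + α 0 + T 0) / 2) := by
  refine isCoboundedUnder_ge_abs_mul_nint (B := 4) fun L => ?_
  obtain ⟨k, hk, hkL⟩ := (hcell.and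
    ((tendsto_const_mul_half_pow (2 * |L|)).eventually_lt_const hν)).exists
  obtain ⟨Z, hZ, hνXY, hXY, hY⟩ := hk.exists_gridOrbit h hT
  obtain ⟨n, m, hXn, hYm⟩ := hZ.exists_int α T
  refine ⟨n, m, ?_⟩
  rw [← hXn, ← hYm]
  refine ⟨?_, hY.trans ?_, hXY⟩
  · by_contra! hXL
    have := mul_le_mul (hXL.trans (le_abs_self L)) hY (abs_nonneg _) (abs_nonneg L)
    linarith
  · linarith [pow_le_one₀ (n := k) one_half_pos.le (one_half_lt_one (α := ℝ)).le]

theorem SymExpansion.div_four_le_Mval (h : RegularCF a α) (hT : SymExpansion a α t T) (hν : 0 < ν)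
    (hta : ∀ᶠ k in atTop, |t k| < a k)
    (hcell : ∀ᶠ k in atTop, DividedCell ν (α k) (backTail a k) (backDev a t k) (T k)) :
    ν / 4 ≤ Mval (α 0) ((1 + α 0 + T 0) / 2) := by
  obtain ⟨K, hK⟩ := eventually_atTop.1 (hta.and hcell)
  obtain ⟨C, hC⟩ := GridOrbit.exists_forall_mul_neg h hT K
  refine _root_.div_four_le_Mval (hT.isCoboundedUnder h hν hcell) (C := C) fun n m hn hm => ?_
  obtain ⟨Z, hZ, hX, hY⟩ := exists_gridOrbit_of_int hT.even_sub α T n m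
  rw [← hX] at hn ⊢
  rw [← hY] at hm ⊢
  obtain ⟨k, hKk, hk, hk'⟩ := hZ.exists_turn (fun k hk => (hK k hk).1) (hC Z hZ hn hm)
  exact hZ.le_abs_mul_abs_of_turn h hT (hK k hKk).2 (hK (k + 1) (by lia)).2 hk hk'

end LowerBound

section AlternatingCell

/-- Eventual bound for the backward deviations of alternating digits, when the odd partial
quotients are at least `1 / y`. -/
noncomputable def altDev (y : ℝ) : ℝ := y + 3 / 2 * y ^ 2

/-- Eventual value of `ν` for the cells of alternating digits, when the odd partial quotients are
at least `1 / y`: it is `1 - 2 y / (1 - y) + 4 y ^ 3` plus `2 y ^ 4 / (1 - y)`. -/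
noncomputable def altConst (y : ℝ) : ℝ := 1 - 2 * y - 2 * y ^ 2 + 2 * y ^ 3

variable {y α β W Z : ℝ}

theorem altDev_nonneg (hy0 : 0 ≤ y) : 0 ≤ altDev y := by
  unfold altDev
  positivity

theorem altDev_le (hy0 : 0 ≤ y) (hy : y ≤ 1 / 5) : altDev y ≤ 13 / 50 := by
  unfold altDev
  nlinarith

theorem altConst_pos (hy0 : 0 ≤ y) (hy : y ≤ 1 / 5) : 0 < altConst y := by
  unfold altConst
  nlinarith [pow_nonneg hy0 3]

theorem altConst_le (hy : y ≤ 1 / 5) : altConst y ≤ 1 - 2 * y := by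
  unfold altConst
  nlinarith [mul_nonneg (sq_nonneg y) (by linarith : 0 ≤ 1 - y)]

theorem altConst_mul_one_add_sq_le (hy0 : 0 ≤ y) (hy : y ≤ 1 / 5) :
    altConst y * (1 + y * y) ≤ (1 - y * altDev y) * (1 - 2 * y) := by
  unfold altConst altDev
  nlinarith [pow_nonneg hy0 3, mul_nonneg (pow_nonneg hy0 4) (by linarith : 0 ≤ 1 - y)]

theorem altConst_mul_add_mul_le (hy0 : 0 ≤ y) (hy : y ≤ 1 / 5) (hα0 : 0 ≤ α) (hα : α ≤ 5 / 4 * y)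
    (hβ0 : 0 ≤ β) {p q : ℝ} (hp : 1 + β - β * altDev y ≤ p) (hq0 : 11 / 20 ≤ q)
    (hq : 1 - 2 * y ≤ q) : altConst y * (1 + α * β) ≤ p * q := by
  have hw := altDev_le hy0 hy
  have hν := altConst_le hy
  have hνα : altConst y * α ≤ 1 / 4 := by nlinarith
  calc altConst y * (1 + α * β) = altConst y + altConst y * α * β := by ring
    _ ≤ q + 37 / 50 * q * β :=
      add_le_add (hν.trans hq) (mul_le_mul_of_nonneg_right (by linarith) hβ0)
    _ ≤ (1 + β - β * altDev y) * q := by nlinarith [mul_nonneg hβ0 (by linarith : 0 ≤ q)]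
    _ ≤ p * q := by gcongr

theorem altConst_top_left (hy0 : 0 ≤ y) (hy : y ≤ 1 / 5) (hα0 : 0 ≤ α) (hα : α ≤ 5 / 4 * y)
    (hβ0 : 0 ≤ β) (hW : -(β * altDev y) ≤ W) (hZ : 0 ≤ Z) :
    altConst y * (1 + α * β) ≤ (1 + β + W) * (1 - α + Z) :=
  altConst_mul_add_mul_le hy0 hy hα0 hα hβ0 (by linarith) (by linarith) (by linarith)

theorem altConst_le_one_sub_sub (hy0 : 0 ≤ y) (hy : y ≤ 1 / 5)
    (hW : β ≤ y ∧ W ≤ β + β * altDev y ∨ β ≤ 5 / 4 * y ∧ W ≤ β * altDev y) :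
    altConst y ≤ 1 - β - W := by
  have hw := altDev_nonneg hy0
  rcases hW with ⟨hβ, hW⟩ | ⟨hβ, hW⟩
  · have hβw : β * altDev y ≤ y * altDev y := mul_le_mul_of_nonneg_right hβ hw
    suffices altConst y ≤ 1 - y - (y + y * altDev y) by linarith
    unfold altConst altDev
    nlinarith [mul_nonneg (sq_nonneg y) (by linarith : 0 ≤ 1 - 7 / 2 * y)]
  · have hβw : β * altDev y ≤ 5 / 4 * y * altDev y := mul_le_mul_of_nonneg_right hβ hw
    suffices altConst y ≤ 1 - 5 / 4 * y - 5 / 4 * y * altDev y by linarith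
    unfold altConst altDev
    nlinarith [mul_nonneg (sq_nonneg y) (by linarith : 0 ≤ 1 / 5 - y)]

theorem altConst_top_right (hy0 : 0 ≤ y) (hy : y ≤ 1 / 5) (hα0 : 0 ≤ α) (hβ0 : 0 ≤ β)
    (hW : β ≤ y ∧ W ≤ β + β * altDev y ∨ β ≤ 5 / 4 * y ∧ W ≤ β * altDev y) (hZ : 0 ≤ Z) :
    altConst y * (1 + α * β) ≤ (1 - β - W) * (1 + α + Z) := by
  have hν := altConst_pos hy0 hy
  have hp := altConst_le_one_sub_sub hy0 hy hW
  have hβ : β ≤ 5 / 4 * y := hW.elim (fun h => by linarith) And.left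
  have hαβ : α * β ≤ α := mul_le_of_le_one_right hα0 (by linarith)
  exact mul_le_mul hp (by linarith) (by positivity) (by linarith)

theorem altConst_bot_right (hy0 : 0 ≤ y) (hy : y ≤ 1 / 5) (hα0 : 0 ≤ α) (hβ0 : 0 ≤ β)
    (hW : β ≤ y ∧ W ≤ β + β * altDev y ∨ β ≤ 5 / 4 * y ∧ W ≤ β * altDev y)
    (hZ : α ≤ y ∧ Z ≤ α ∨ α ≤ 5 / 4 * y ∧ Z ≤ α / 4) :
    altConst y * (1 + α * β) ≤ (1 + β - W) * (1 - α - Z) := by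
  have hν := altConst_pos hy0 hy
  have hw0 := altDev_nonneg hy0
  have hw := altDev_le hy0 hy
  rcases hW with ⟨hβ, hW⟩ | ⟨-, hW⟩
  · have hp : 1 - y * altDev y ≤ 1 + β - W := by nlinarith
    have hp0 : 0 ≤ 1 - y * altDev y := by nlinarith
    rcases hZ with ⟨hα, hZ⟩ | ⟨hα, hZ⟩
    · calc altConst y * (1 + α * β) ≤ altConst y * (1 + y * y) := by gcongr
        _ ≤ (1 - y * altDev y) * (1 - 2 * y) := altConst_mul_one_add_sq_le hy0 hy
        _ ≤ (1 + β - W) * (1 - α - Z) :=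
        mul_le_mul hp (by linarith) (by linarith) (by linarith)
    · calc altConst y * (1 + α * β) ≤ altConst y * (1 + 5 / 4 * y * y) := by gcongr
        _ = altConst y * (1 + y * y) + 1 / 4 * y * (altConst y * y) := by ring
        _ ≤ (1 - y * altDev y) * (1 - 2 * y) + 7 / 16 * y * (1 - y * altDev y) := by
          have := altConst_mul_one_add_sq_le hy0 hy
          have := altConst_le hy
          gcongr ?_ + ?_ * ?_ <;> nlinarith
        _ = (1 - y * altDev y) * (1 - 25 / 16 * y) := by ring
        _ ≤ (1 + β - W) * (1 - α - Z) :=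
        mul_le_mul hp (by linarith) (by linarith) (by linarith)
  · have hα : α ≤ 5 / 4 * y := hZ.elim (fun h => by linarith) And.left
    have hq : 1 - 2 * y ≤ 1 - α - Z := by rcases hZ with ⟨_, _⟩ | ⟨_, _⟩ <;> linarith
    exact altConst_mul_add_mul_le hy0 hy hα0 hα hβ0 (by linarith) (by linarith) hq

theorem altConst_bot_left (hy0 : 0 ≤ y) (hy : y ≤ 1 / 5) (hα0 : 0 ≤ α) (hα : α ≤ 5 / 4 * y)
    (hβ0 : 0 ≤ β) (hβ : β ≤ 5 / 4 * y) (hW : -(β * altDev y) ≤ W) (hZ : Z ≤ α) :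
    altConst y * (1 + α * β) ≤ (1 - β + W) * (1 + α - Z) := by
  have hν := altConst_le hy
  have hw := altDev_le hy0 hy
  have hp : 1 - 63 / 40 * y ≤ 1 - β + W := by nlinarith
  have hαβ : α * β ≤ 5 / 16 * y := by nlinarith
  calc altConst y * (1 + α * β) ≤ (1 - 2 * y) * (1 + 5 / 16 * y) := by gcongr; linarith
    _ ≤ 1 - 63 / 40 * y := by nlinarith
    _ ≤ (1 - β + W) * (1 + α - Z) := by nlinarith

theorem DividedCell.of_alternating (hy0 : 0 ≤ y) (hy : y ≤ 1 / 5) (hα0 : 0 ≤ α) (hβ0 : 0 ≤ β)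
    (hW0 : -(β * altDev y) ≤ W)
    (hW : β ≤ y ∧ W ≤ β + β * altDev y ∨ β ≤ 5 / 4 * y ∧ W ≤ β * altDev y) (hZ0 : 0 ≤ Z)
    (hZ : α ≤ y ∧ Z ≤ α ∨ α ≤ 5 / 4 * y ∧ Z ≤ α / 4) :
    DividedCell (altConst y) α β W (-Z) := by
  have hβ : β ≤ 5 / 4 * y := hW.elim (fun h => by linarith) And.left
  have hα : α ≤ 5 / 4 * y := hZ.elim (fun h => by linarith) And.left
  have hZα : Z ≤ α := by rcases hZ with ⟨_, _⟩ | ⟨_, _⟩ <;> linarith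
  have hp := altConst_le_one_sub_sub hy0 hy hW
  have hν := altConst_pos hy0 hy
  have hβw : β * altDev y ≤ β := mul_le_of_le_one_right hβ0 (by linarith [altDev_le hy0 hy])
  constructor
  · exact abs_le.2 ⟨by linarith, by linarith⟩
  · exact abs_le.2 ⟨by linarith, by linarith⟩
  · simpa using altConst_top_left hy0 hy hα0 hα hβ0 hW0 hZ0
  · simpa using altConst_top_right hy0 hy hα0 hβ0 hW hZ0
  · simpa [sub_eq_add_neg] using altConst_bot_right hy0 hy hα0 hβ0 hW hZ
  · simpa [sub_eq_add_neg] using altConst_bot_left hy0 hy hα0 hα hβ0 hβ hW0 hZα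

theorem le_altConst {N : ℝ} (hN : 1 < N) :
    1 - 2 / (N - 1) + 4 / N ^ 3 ≤ altConst (1 / N) := by
  have hpos : 0 < N - 1 := by linarith
  have hdiff : altConst (1 / N) - (1 - 2 / (N - 1) + 4 / N ^ 3) = 2 / (N ^ 3 * (N - 1)) := by
    unfold altConst
    field_simp
    ring
  have : 0 ≤ 2 / (N ^ 3 * (N - 1)) := by positivity
  linarith

end AlternatingCell

section AlternatingDigits

theorem le_of_forall_halving {ι : Type*} {x : ι → ℝ} {u B : ℝ} (hB : 0 ≤ B)
    (hx : ∀ k, x k ≤ u + B)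
    (hhalf : ∀ e, 0 ≤ e → (∀ k, x k ≤ u + e) → ∀ k, x k ≤ u + 1 / 2 * e) (k : ι) : x k ≤ u := by
  have hpow : ∀ j : ℕ, ∀ k, x k ≤ u + (1 / 2) ^ j * B := fun j => by
    induction j with
    | zero => simpa using hx
    | succ j ih =>
      rw [pow_succ', mul_assoc]
      exact hhalf _ (by positivity) ih
  simpa using ge_of_tendsto' ((tendsto_const_mul_half_pow B).const_add u) fun j => hpow j k

theorem eventually_lt_of_eventually_halving {x : ℕ → ℝ} {u w : ℝ} (huw : u < w)
    (hhalf : ∀ᶠ k in atTop, ∀ e, 0 ≤ e → x k ≤ u + e → x (k + 1) ≤ u + 1 / 2 * e) :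
    ∀ᶠ k in atTop, x k < w := by
  obtain ⟨K, hK⟩ := eventually_atTop.1 hhalf
  have hpow : ∀ j : ℕ, x (j + K) ≤ u + (1 / 2) ^ j * |x K - u| := fun j => by
    induction j with
    | zero => simpa using sub_le_iff_le_add'.1 (le_abs_self (x K - u))
    | succ j ih =>
      rw [pow_succ', mul_assoc, add_right_comm]
      exact hK _ le_add_self _ (by positivity) ih
  rw [← map_add_atTop_eq_nat K, eventually_map]
  filter_upwards [(tendsto_const_mul_half_pow |x K - u|).eventually_lt_const (sub_pos.2 huw)]
    with j hj
  linarith [hpow j]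

/-- The digits `t` of `γ_*`, which vanish at even partial quotients and are alternately `-1` and
`1` at odd ones; `-σ k` is the first nonzero digit with index at least `k`. -/
structure AlternatingDigits (a t σ : ℕ → ℤ) : Prop where
  sign : ∀ k, σ k = 1 ∨ σ k = -1
  odd : ∀ k, Odd (a k) → t k = -σ k ∧ σ (k + 1) = -σ k
  even : ∀ k, Even (a k) → t k = 0 ∧ σ (k + 1) = σ k

variable {a t σ : ℕ → ℤ} {α T : ℕ → ℝ} {B N : ℝ}

namespace AlternatingDigits

variable (ht : AlternatingDigits a t σ)
include ht

theorem abs_le_one (k : ℕ) : |t k| ≤ 1 := by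
  rcases Int.even_or_odd (a k) with he | ho
  · simp [ht.even k he]
  · rcases ht.sign k with hs | hs <;> simp [ht.odd k ho, hs]

theorem even_sub (k : ℕ) : Even (a k - t k) := by
  rcases Int.even_or_odd (a k) with he | ho
  · simpa [ht.even k he] using he
  · have hodd : Odd (t k) := by rcases ht.sign k with hs | hs <;> simp [ht.odd k ho, hs]
    exact ho.sub_odd hodd

theorem mul_self (k : ℕ) : (σ k : ℝ) * σ k = 1 := by
  rcases ht.sign k with hs | hs <;> simp [hs]

theorem backDev_succ_of_odd {k : ℕ} (ho : Odd (a k)) :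
    σ (k + 1) * backDev a t (k + 1) = backTail a (k + 1) * (1 + σ k * backDev a t k) := by
  obtain ⟨htk, hs⟩ := ht.odd k ho
  rw [backDev, htk, hs]
  push_cast
  linear_combination backTail a (k + 1) * ht.mul_self k

theorem backDev_succ_of_even {k : ℕ} (he : Even (a k)) :
    σ (k + 1) * backDev a t (k + 1) = -(backTail a (k + 1) * (σ k * backDev a t k)) := by
  obtain ⟨htk, hs⟩ := ht.even k he
  rw [backDev, htk, hs]
  push_cast
  ring

theorem forwDev_of_odd (hT : ∀ k, T k = α k * (t k + T (k + 1))) {k : ℕ} (ho : Odd (a k)) :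
    -(σ k * T k) = α k * (1 + σ (k + 1) * T (k + 1)) := by
  obtain ⟨htk, hs⟩ := ht.odd k ho
  rw [hT, htk, hs]
  push_cast
  linear_combination α k * ht.mul_self k

theorem forwDev_of_even (hT : ∀ k, T k = α k * (t k + T (k + 1))) {k : ℕ} (he : Even (a k)) :
    -(σ k * T k) = α k * -(σ (k + 1) * T (k + 1)) := by
  obtain ⟨htk, hs⟩ := ht.even k he
  rw [hT, htk, hs]
  push_cast
  ring

theorem forwDev_mem_Icc (h : RegularCF a α) (hT : ∀ k, T k = α k * (t k + T (k + 1)))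
    (hB : ∀ k, |T k| ≤ B) (k : ℕ) : -(σ k * T k) ∈ Set.Icc (0 : ℝ) 1 := by
  suffices |-(σ k * T k) - 1 / 2| ≤ 1 / 2 by
    rw [abs_le] at this
    exact ⟨by linarith, by linarith⟩
  refine le_of_forall_halving (x := fun k => |-(σ k * T k) - 1 / 2|) ((abs_nonneg _).trans (hB 0))
    (fun k => ?_) (fun e he hx k => ?_) k
  · have hsT : |σ k * T k| ≤ B := by
      rcases ht.sign k with hs | hs <;> simpa [hs] using hB k
    obtain ⟨hlo, hhi⟩ := abs_le.1 hsT
    exact abs_le.2 ⟨by linarith, by linarith⟩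
  · have hα0 := h.pos k
    have hα := h.le_half k
    obtain ⟨hlo, hhi⟩ := abs_le.1 (hx (k + 1))
    rw [abs_le]
    rcases Int.even_or_odd (a k) with hev | ho
    · rw [ht.forwDev_of_even hT hev]
      constructor <;> nlinarith
    · rw [ht.forwDev_of_odd hT ho]
      constructor <;> nlinarith

theorem forwDev_le (h : RegularCF a α) (hT : ∀ k, T k = α k * (t k + T (k + 1)))
    (hB : ∀ k, |T k| ≤ B) (k : ℕ) : -(σ k * T k) ≤ α k := by
  obtain ⟨hlo, hhi⟩ := ht.forwDev_mem_Icc h hT hB (k + 1)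
  rcases Int.even_or_odd (a k) with he | ho
  · rw [ht.forwDev_of_even hT he]
    exact mul_le_of_le_one_right (h.pos k).le hhi
  · rw [ht.forwDev_of_odd hT ho]
    exact mul_le_of_le_one_right (h.pos k).le (by linarith)

theorem eventually_abs_backDev_lt (ha : ∀ k, 1 ≤ a k) (hN : 5 ≤ N)
    (hodd : ∀ᶠ k in atTop, Odd (a k) → N ≤ a k) (hlow : ∀ᶠ k in atTop, N - 1 ≤ a k) :
    ∀ᶠ k in atTop, |σ k * backDev a t k| < altDev (1 / N) := by
  have hy0 : 0 < 1 / N := by positivity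
  have hy : 1 / N ≤ 1 / 5 := one_div_le_one_div_of_le (by norm_num) hN
  refine eventually_lt_of_eventually_halving (u := 1 / N + 4 / 3 * (1 / N) ^ 2)
    (by unfold altDev; nlinarith) ?_
  filter_upwards [hodd, hlow] with k hko hkl e he hx
  have hβ0 := backTail_nonneg ha (k + 1)
  rcases Int.even_or_odd (a k) with hev | ho
  · have hβ : backTail a (k + 1) ≤ 1 / 2 := by
      linarith [backTail_succ_mul_le_one ha (c := 2) (by linarith : (2 : ℝ) ≤ a k)]
    rw [ht.backDev_succ_of_even hev, abs_neg, abs_mul, abs_of_nonneg hβ0]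
    nlinarith [abs_nonneg (σ k * backDev a t k)]
  · have hβ : backTail a (k + 1) ≤ 1 / N :=
      (le_div_iff₀ (by linarith)).2 (backTail_succ_mul_le_one ha (hko ho))
    rw [ht.backDev_succ_of_odd ho, abs_mul, abs_of_nonneg hβ0]
    calc backTail a (k + 1) * |1 + σ k * backDev a t k|
        ≤ 1 / N * (1 + (1 / N + 4 / 3 * (1 / N) ^ 2 + e)) := by
          gcongr
          exact (abs_add_le _ _).trans (by rw [abs_one]; linarith)
      _ ≤ 1 / N + 4 / 3 * (1 / N) ^ 2 + 1 / 2 * e := by nlinarith [sq_nonneg (1 / N)]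

theorem eventually_backDev_bounds (ha : ∀ k, 1 ≤ a k) (hN : 5 ≤ N)
    (hodd : ∀ᶠ k in atTop, Odd (a k) → N ≤ a k) (hlow : ∀ᶠ k in atTop, N - 1 ≤ a k) :
    ∀ᶠ k in atTop, -(backTail a k * altDev (1 / N)) ≤ σ k * backDev a t k ∧
      (backTail a k ≤ 1 / N ∧
          σ k * backDev a t k ≤ backTail a k + backTail a k * altDev (1 / N) ∨
        backTail a k ≤ 5 / 4 * (1 / N) ∧
          σ k * backDev a t k ≤ backTail a k * altDev (1 / N)) := by
  have hdev := ht.eventually_abs_backDev_lt ha hN hodd hlow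
  rw [← map_add_atTop_eq_nat 1, eventually_map]
  filter_upwards [hdev, hodd, hlow] with k hk hko hkl
  have hβ0 := backTail_nonneg ha (k + 1)
  obtain ⟨hlo, hhi⟩ := abs_lt.1 hk
  rcases Int.even_or_odd (a k) with he | ho
  · rw [ht.backDev_succ_of_even he]
    refine ⟨by nlinarith, .inr ⟨?_, by nlinarith⟩⟩
    have hβ := backTail_succ_mul_le_one ha (k := k) (c := 4 / 5 * N) (by linarith)
    rw [mul_one_div, le_div_iff₀ (by linarith)]
    linarith
  · rw [ht.backDev_succ_of_odd ho]
    exact ⟨by nlinarith, .inl ⟨(le_div_iff₀ (by linarith)).2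
      (backTail_succ_mul_le_one ha (hko ho)), by nlinarith⟩⟩

theorem eventually_forwDev_bounds (h : RegularCF a α)
    (hT : ∀ k, T k = α k * (t k + T (k + 1))) (hB : ∀ k, |T k| ≤ B) (hN : 5 ≤ N)
    (hodd : ∀ᶠ k in atTop, Odd (a k) → N ≤ a k) (hlow : ∀ᶠ k in atTop, N - 1 ≤ a k) :
    ∀ᶠ k in atTop, α k ≤ 1 / N ∧ -(σ k * T k) ≤ α k ∨
      α k ≤ 5 / 4 * (1 / N) ∧ -(σ k * T k) ≤ α k / 4 := by
  have hnext := h.eventually_le_inv four_pos (hlow.mono fun k hk => by linarith)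
  filter_upwards [hodd, hlow, (tendsto_add_atTop_nat 1).eventually hnext] with k hko hkl hα'
  have hα0 := h.pos k
  rcases Int.even_or_odd (a k) with he | ho
  · have hα := h.mul_le_one (k := k) (c := 4 / 5 * N) (by linarith)
    refine .inr ⟨by rw [mul_one_div, le_div_iff₀ (by linarith)]; linarith, ?_⟩
    rw [ht.forwDev_of_even hT he]
    nlinarith [ht.forwDev_le h hT hB (k + 1)]
  · exact .inl ⟨(le_div_iff₀ (by linarith)).2 (h.mul_le_one (hko ho)), ht.forwDev_le h hT hB k⟩

theorem eventually_dividedCell (h : RegularCF a α) (hT : ∀ k, T k = α k * (t k + T (k + 1)))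
    (hB : ∀ k, |T k| ≤ B) (hN : 5 ≤ N) (hodd : ∀ᶠ k in atTop, Odd (a k) → N ≤ a k)
    (hlow : ∀ᶠ k in atTop, N - 1 ≤ a k) :
    ∀ᶠ k in atTop,
      DividedCell (altConst (1 / N)) (α k) (backTail a k) (backDev a t k) (T k) := by
  filter_upwards [ht.eventually_backDev_bounds h.one_le hN hodd hlow,
    ht.eventually_forwDev_bounds h hT hB hN hodd hlow] with k ⟨hW0, hW⟩ hZ
  have hcell := DividedCell.of_alternating (by positivity)
    (one_div_le_one_div_of_le (by norm_num) hN) (h.pos k).le (backTail_nonneg h.one_le k) hW0 hW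
    (ht.forwDev_mem_Icc h hT hB k).1 hZ
  rcases ht.sign k with hs | hs
  · simpa [hs] using hcell
  · simpa [hs] using hcell.neg

theorem add_le_Mval (h : RegularCF a α) (hT : ∀ k, T k = α k * (t k + T (k + 1)))
    (hB : ∀ k, |T k| ≤ B) (hN : 5 ≤ N) (hodd : ∀ᶠ k in atTop, Odd (a k) → N ≤ a k)
    (hlow : ∀ᶠ k in atTop, N - 1 ≤ a k) :
    (1 - 2 / (N - 1)) / 4 + 1 / N ^ 3 ≤ Mval (α 0) ((1 + α 0 + T 0) / 2) := by
  have hν := altConst_pos (y := 1 / N) (by positivity)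
    (one_div_le_one_div_of_le (by norm_num) hN)
  have hle := SymExpansion.div_four_le_Mval h ⟨ht.even_sub, hT⟩ hν
    (Eventually.of_forall fun k => (ht.abs_le_one k).trans_lt (h.two_le k))
    (ht.eventually_dividedCell h hT hB hN hodd hlow)
  have hconst := le_altConst (by linarith : 1 < N)
  have hdiv : 4 / N ^ 3 = 4 * (1 / N ^ 3) := by ring
  linarith

end AlternatingDigits

end AlternatingDigits

section ForwardDeviation

/-- The forward deviation `d_k⁺ = Σ_{j ≥ k} t_j α_k ⋯ α_j` of the sequence `t`. -/
noncomputable def forwDev (α : ℕ → ℝ) (t : ℕ → ℤ) (k : ℕ) : ℝ :=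
  ∑' j, t (k + j) * ∏ i ∈ range (j + 1), α (k + i)

variable {a t : ℕ → ℤ} {α : ℕ → ℝ}

namespace RegularCF

variable (h : RegularCF a α)
include h

theorem prod_le_half_pow (k n : ℕ) : ∏ i ∈ range n, α (k + i) ≤ (1 / 2) ^ n := by
  simpa using prod_le_prod (fun i _ => (h.pos (k + i)).le)
    fun i (_ : i ∈ range n) => h.le_half (k + i)

theorem hasSum_mul_prod : HasSum (fun k => a k * ∏ i ∈ range (k + 1), α i) (1 + α 0) := by
  have hpos : ∀ n, 0 ≤ ∏ i ∈ range n, α i := fun n => prod_nonneg fun i _ => (h.pos i).le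
  have hlim : Tendsto (fun n => ∏ i ∈ range n, α i) atTop (𝓝 0) := by
    refine squeeze_zero hpos (fun n => ?_) (by simpa using tendsto_const_mul_half_pow 1)
    simpa using h.prod_le_half_pow 0 n
  rw [hasSum_iff_tendsto_nat_of_nonneg fun k =>
    mul_nonneg (Int.cast_nonneg (zero_le_one.trans (h.one_le k))) (hpos _)]
  have htele : ∀ n, ∑ k ∈ range n, a k * ∏ i ∈ range (k + 1), α i =
      1 + α 0 - (∏ i ∈ range n, α i + ∏ i ∈ range (n + 1), α i) := fun n => by
    induction n with
    | zero => simp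
    | succ n ih =>
      rw [sum_range_succ, ih]
      simp only [prod_range_succ]
      linear_combination (∏ i ∈ range n, α i) * h.mul_add n
  simp only [htele]
  simpa using (hlim.add ((tendsto_add_atTop_iff_nat 1).2 hlim)).const_sub (1 + α 0)

variable (ht : ∀ k, |t k| ≤ 1)
include ht

theorem norm_forwDev_term_le (k j : ℕ) :
    ‖t (k + j) * ∏ i ∈ range (j + 1), α (k + i)‖ ≤ 1 / 2 / 2 ^ j := by
  have htj : |(t (k + j) : ℝ)| ≤ 1 := by exact_mod_cast ht (k + j)
  have hpos : 0 ≤ ∏ i ∈ range (j + 1), α (k + i) := prod_nonneg fun i _ => (h.pos _).le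
  rw [Real.norm_eq_abs, abs_mul, abs_of_nonneg hpos]
  refine (mul_le_of_le_one_left hpos htj).trans ((h.prod_le_half_pow k (j + 1)).trans_eq ?_)
  rw [pow_succ', one_div_pow, div_div, mul_one_div, div_div]

theorem summable_forwDev (k : ℕ) :
    Summable fun j => t (k + j) * ∏ i ∈ range (j + 1), α (k + i) :=
  .of_norm_bounded (hasSum_geometric_two' 1).summable (h.norm_forwDev_term_le ht k)

theorem abs_forwDev_le (k : ℕ) : |forwDev α t k| ≤ 1 :=
  tsum_of_norm_bounded (hasSum_geometric_two' 1) (h.norm_forwDev_term_le ht k)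

theorem forwDev_eq_mul (k : ℕ) : forwDev α t k = α k * (t k + forwDev α t (k + 1)) := by
  rw [forwDev, (h.summable_forwDev ht k).tsum_eq_zero_add, forwDev, _root_.mul_add, ← tsum_mul_left]
  congr 1
  · simp [mul_comm]
  · refine tsum_congr fun j => ?_
    rw [prod_range_succ', ← add_assoc, add_right_comm k j 1, add_zero]
    simp only [← add_assoc, add_right_comm k _ 1]
    ring

theorem hasSum_half_add_mul_prod :
    HasSum (fun k => ((a k : ℝ) + t k) / 2 * ∏ i ∈ range (k + 1), α i)
      ((1 + α 0 + forwDev α t 0) / 2) := by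
  have hsum := (h.hasSum_mul_prod.add (h.summable_forwDev ht 0).hasSum).div_const 2
  simpa only [zero_add, ← add_mul, mul_div_right_comm, forwDev] using hsum

end RegularCF

end ForwardDeviation

section NICF

variable {α γ : ℝ}

theorem nicfT_succ_eq_fract (heps : ∀ i, nicfE α i = 1) (k : ℕ) :
    nicfT α (k + 1) = Int.fract (nicfT α k)⁻¹ ∧ nicfA α (k + 1) = ⌊(nicfT α k)⁻¹⌋ ∧
      Int.fract (nicfT α k)⁻¹ ≤ 1 / 2 := by
  have hfract : Int.fract (nicfT α k)⁻¹ ≤ 1 / 2 := by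
    by_contra hlt
    have := heps (k + 2)
    rw [nicfE, if_neg hlt] at this
    lia
  exact ⟨if_pos hfract, if_pos hfract, hfract⟩

theorem irrational_nicfT (hirr : Irrational α) (heps : ∀ i, nicfE α i = 1) :
    ∀ k, Irrational (nicfT α k)
  | 0 => hirr
  | k + 1 => by
    rw [(nicfT_succ_eq_fract heps k).1]
    exact (irrational_inv_iff.2 (irrational_nicfT hirr heps k)).sub_intCast _

theorem nicfT_mem_Ioc (hirr : Irrational α) (h0 : 0 < α) (h12 : α ≤ 1 / 2)
    (heps : ∀ i, nicfE α i = 1) : ∀ k, nicfT α k ∈ Set.Ioc 0 (1 / 2)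
  | 0 => ⟨h0, h12⟩
  | k + 1 => by
    obtain ⟨hT, -, hfract⟩ := nicfT_succ_eq_fract heps k
    refine ⟨(irrational_nicfT hirr heps _).ne_zero.symm.lt_of_le ?_, hT ▸ hfract⟩
    exact hT ▸ Int.fract_nonneg _

theorem regularCF_nicf (hirr : Irrational α) (h0 : 0 < α) (h12 : α ≤ 1 / 2)
    (heps : ∀ i, nicfE α i = 1) : RegularCF (fun k => nicfA α (k + 1)) (nicfT α) where
  two_le k := by
    obtain ⟨hpos, hle⟩ := nicfT_mem_Ioc hirr h0 h12 heps k
    rw [(nicfT_succ_eq_fract heps k).2.1, Int.le_floor, Int.cast_ofNat,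
      le_inv_comm₀ two_pos hpos, ← one_div]
    exact hle
  pos k := (nicfT_mem_Ioc hirr h0 h12 heps k).1
  mul_add k := by
    obtain ⟨hT, hA, -⟩ := nicfT_succ_eq_fract heps k
    rw [hT, hA, Int.floor_add_fract]
    exact mul_inv_cancel₀ (irrational_nicfT hirr heps k).ne_zero

theorem alphaExpansion_gSeq (hα : ∀ k, nicfT α k ≠ 0) (hγ0 : 0 ≤ γ) (hγ1 : γ < 1) :
    AlphaExpansion (fun k => cCoef α γ (k + 1)) (nicfT α) (gSeq α γ) where
  nonneg k := k.casesOn hγ0 fun _ => Int.fract_nonneg _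
  lt_one k := k.casesOn hγ1 fun _ => Int.fract_lt_one _
  step k := by
    change gSeq α γ k = nicfT α k * (⌊gSeq α γ k / nicfT α k⌋ + Int.fract (gSeq α γ k / nicfT α k))
    rw [Int.floor_add_fract, mul_div_cancel₀ _ (hα k)]

theorem oddIdx_succ (α : ℝ) (k : ℕ) :
    oddIdx α (k + 1) = oddIdx α k + if Odd (nicfA α (k + 1)) then 1 else 0 := by
  rw [oddIdx, oddIdx, ← insert_Icc_right_eq_Icc_add_one (by lia), filter_insert]
  split_ifs with ho
  · exact card_insert_of_notMem (by simp)
  · rfl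

theorem alternatingDigits_lamStar (α : ℝ) :
    AlternatingDigits (fun k => nicfA α (k + 1)) (fun k => lamStar α (k + 1))
      fun k => (-1) ^ oddIdx α k where
  sign k := neg_one_pow_eq_or ℤ _
  odd k ho := by simp [lamStar, oddIdx_succ, if_pos ho, pow_succ]
  even k he := by simp [lamStar, oddIdx_succ, if_neg (Int.not_odd_iff_even.2 he)]

theorem gammaStar_eq (h : RegularCF (fun k => nicfA α (k + 1)) (nicfT α))
    (heps : ∀ i, nicfE α i = 1) :
    gammaStar α = (1 + α + forwDev (nicfT α) (fun k => lamStar α (k + 1)) 0) / 2 := by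
  rw [gammaStar]
  have hsum := h.hasSum_half_add_mul_prod (alternatingDigits_lamStar α).abs_le_one
  convert hsum.tsum_eq using 3 with k
  · rw [heps]
    simp [nicfD]
  · rfl

end NICF

section OddCeil

/-- `R_*`, the least odd integer at least `R`. -/
noncomputable def oddCeil (R : ℕ) : ℝ := if Odd R then (R : ℝ) else (R : ℝ) + 1

variable {R : ℕ}

theorem five_le_oddCeil (hR : 4 ≤ R) : 5 ≤ oddCeil R := by
  unfold oddCeil
  split_ifs with ho
  · have : 5 ≤ R := hR.lt_of_ne fun h => absurd (h ▸ ho) (by decide)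
    exact_mod_cast this
  · have : (4 : ℝ) ≤ R := by exact_mod_cast hR
    linarith

theorem oddCeil_sub_one_le {a : ℤ} (ha : R ≤ a) : oddCeil R - 1 ≤ a := by
  have : (R : ℝ) ≤ a := by exact_mod_cast ha
  unfold oddCeil
  split_ifs <;> linarith

theorem oddCeil_le_of_odd {a : ℤ} (ha : R ≤ a) (ho : Odd a) : oddCeil R ≤ a := by
  unfold oddCeil
  split_ifs with hR
  · exact_mod_cast ha
  · have hne : (R : ℤ) ≠ a := by
      rintro rfl
      exact hR (by exact_mod_cast ho)
    exact_mod_cast ha.lt_of_ne hne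

theorem digit_eq_of_abs_lt (hR : 4 ≤ R) {c : ℤ}
    (hc : ((|2 * c - R| : ℤ) : ℝ) < 2 * R / (oddCeil R - 1)) :
    (Odd R → 2 * c - R = 1 ∨ 2 * c - R = -1) ∧ (Even R → 2 * c - R = 0) := by
  have hR5 := five_le_oddCeil hR
  refine ⟨fun ho => ?_, fun he => ?_⟩
  · rw [oddCeil, if_pos ho] at hc hR5
    have hlt : |2 * c - (R : ℤ)| < 3 := by
      have : 2 * (R : ℝ) / (R - 1) < 3 := (div_lt_iff₀ (by linarith)).2 (by linarith)
      exact_mod_cast hc.trans this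
    obtain ⟨r, rfl⟩ := ho
    rw [abs_lt] at hlt
    lia
  · rw [oddCeil, if_neg (Nat.not_odd_iff_even.2 he), add_sub_cancel_right,
      mul_div_cancel_right₀ _ (by positivity)] at hc
    have hlt : |2 * c - (R : ℤ)| < 2 := by exact_mod_cast hc
    obtain ⟨r, rfl⟩ := he
    rw [abs_lt] at hlt
    lia

end OddCeil

theorem le_Mval_gammaStar {α : ℝ} (h : RegularCF (fun k => nicfA α (k + 1)) (nicfT α))
    (heps : ∀ i, nicfE α i = 1) {R : ℕ} (hR : 4 ≤ R) (hbd : ∀ᶠ k in atTop, R ≤ nicfA α (k + 1)) :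
    (1 - 2 / (oddCeil R - 1)) / 4 + 1 / oddCeil R ^ 3 ≤ Mval α (gammaStar α) := by
  have ht := alternatingDigits_lamStar α
  have hle := ht.add_le_Mval h (h.forwDev_eq_mul ht.abs_le_one) (h.abs_forwDev_le ht.abs_le_one)
    (five_le_oddCeil hR) (hbd.mono fun k hk => oddCeil_le_of_odd hk)
    (hbd.mono fun k hk => oddCeil_sub_one_le hk)
  rwa [nicfT, ← gammaStar_eq h heps] at hle

theorem stmt8_general (α γ : ℝ) (hirr : Irrational α) (h0 : 0 < α) (h12 : α < 1 / 2)
    (heps : ∀ i, nicfE α i = 1)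
    (R : ℕ) (hR4 : 4 ≤ R)
    (hbd : ∀ᶠ i in Filter.atTop, (R : ℤ) ≤ nicfA α i)
    (hγ0 : 0 ≤ γ) (hγ1 : γ < 1)
    (hγnl : ¬∃ p q : ℤ, γ = (p : ℝ) + (q : ℝ) * α)
    (Rs : ℝ) (hRs : Rs = if Odd R then (R : ℝ) else (R : ℝ) + 1)
    (hM : Mval α γ > Mval α (gammaStar α) - 1 / Rs ^ 3) :
    (∀ᶠ i in Filter.atTop,
        ((|2 * cCoef α γ i - nicfA α i| : ℤ) : ℝ) < 2 * (nicfA α i : ℝ) / (Rs - 1)) ∧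
      ∀ᶠ k in Filter.atTop, nicfA α k = (R : ℤ) →
        (Odd R →
          2 * cCoef α γ k - nicfA α k = 1 ∨ 2 * cCoef α γ k - nicfA α k = -1) ∧
        (Even R → 2 * cCoef α γ k - nicfA α k = 0) := by
  replace hRs : Rs = oddCeil R := hRs
  subst hRs
  have hcf := regularCF_nicf hirr h0 h12.le heps
  have hexp := alphaExpansion_gSeq (fun k => (hcf.pos k).ne') hγ0 hγ1
  have hbd' := (tendsto_add_atTop_nat 1).eventually hbd
  have hstar := le_Mval_gammaStar hcf heps hR4 hbd'
  have hν : 2 / (oddCeil R - 1) ≤ 1 / 2 := by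
    have := five_le_oddCeil hR4
    exact (div_le_iff₀ (by linarith)).2 (by linarith)
  have hnl : ∀ n m : ℤ, n * α - γ ≠ m := fun n m hnm =>
    hγnl ⟨-m, n, by push_cast; linarith⟩
  have hdigit : ∀ᶠ i in atTop,
      ((|2 * cCoef α γ i - nicfA α i| : ℤ) : ℝ) < 2 * nicfA α i / (oddCeil R - 1) := by
    rw [← map_add_atTop_eq_nat 1, eventually_map]
    simpa only [sub_sub_cancel, div_mul_eq_mul_div] using hexp.eventually_abs_digit_lt hcf
      (hbd'.mono fun k hk => le_trans (mod_cast hR4) hk) hnl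
      (ν := 1 - 2 / (oddCeil R - 1)) (by linarith) (by change _ < Mval α γ; linarith)
  refine ⟨hdigit, hdigit.mono fun k hk hkR => ?_⟩
  rw [hkR] at hk ⊢
  exact digit_eq_of_abs_lt hR4 (mod_cast hk)

/-- Theorem 7 (regular continued fraction case): if the NICF expansion of `α` is regular
(all `ε_i = +1`) and `M(α,γ) > M(α,γ_*) - R_*⁻³`, then `|t_i| < 2a_i/(R_*-1)` for almost
all `i`, and `a_k = R` forces `t_k = ±1` (`R` odd) or `t_k = 0` (`R` even). -/
theorem stmt8 (α γ : ℝ) (hirr : Irrational α) (h0 : 0 < α) (h12 : α < 1 / 2)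
    (heps : ∀ i, nicfE α i = 1)
    (R : ℕ) (hR4 : 4 ≤ R)
    (hbd : ∀ᶠ i in Filter.atTop, (R : ℤ) ≤ nicfA α i)
    (hfreq : ∃ᶠ i in Filter.atTop, nicfA α i = (R : ℤ))
    (hγ0 : 0 ≤ γ) (hγ1 : γ < 1)
    (hγnl : ¬∃ p q : ℤ, γ = (p : ℝ) + (q : ℝ) * α)
    (Rs : ℝ) (hRs : Rs = if Odd R then (R : ℝ) else (R : ℝ) + 1)
    (hM : Mval α γ > Mval α (gammaStar α) - 1 / Rs ^ 3) :
    (∀ᶠ i in Filter.atTop,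
        ((|2 * cCoef α γ i - nicfA α i| : ℤ) : ℝ) < 2 * (nicfA α i : ℝ) / (Rs - 1)) ∧
      ∀ᶠ k in Filter.atTop, nicfA α k = (R : ℤ) →
        (Odd R →
          2 * cCoef α γ k - nicfA α k = 1 ∨ 2 * cCoef α γ k - nicfA α k = -1) ∧
        (Even R → 2 * cCoef α γ k - nicfA α k = 0) :=
  stmt8_general α γ hirr h0 h12 heps R hR4 hbd hγ0 hγ1 hγnl Rs hRs hM
end

section
/- Suppose α has an adjusted nearest integer expansion with liminf_{i→∞} a_i = 2, and let γ_* be the associated point with t_i = λ_i and d_n^± as defined. Then every index i lies in S(γ_*), and for all i ≥ 1, |d_i^+| ≤ min{α_i, 2/5} and |d_i^−| ≤ min{1/2, (3/2)ᾱ_i}. -/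
open Filter Finset

attribute [local instance] Classical.propDecidable

/-- Denominators `q_i` of a semi-regular continued fraction with partial quotients `a`
and signs `e`: `q_0 = 1`, `q_1 = a_1`, `q_i = a_i q_{i-1} + ε_i q_{i-2}`. -/
noncomputable def qs (a e : ℕ → ℤ) : ℕ → ℤ
  | 0 => 1
  | 1 => a 1
  | i + 2 => a (i + 2) * qs a e (i + 1) + e (i + 2) * qs a e i

/-- Reversed tails `ᾱ_i = q_{i-1}/q_i` (with `ᾱ_0 = 0`). -/
noncomputable def ab (a e : ℕ → ℤ) (i : ℕ) : ℝ :=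
  if i = 0 then 0 else (qs a e (i - 1) : ℝ) / (qs a e i : ℝ)

/-- An adjusted nearest integer expansion of `α`: a semi-regular continued fraction
`α = 1/(a_1 + ε_2/(a_2 + ε_3/(a_3 + ⋯)))` with tails `t i = α_i`, satisfying the
conditions (i)-(iv) of an adjusted expansion. -/
structure ANIE (α : ℝ) where
  /-- partial quotients `a_i` (for `i ≥ 1`) -/
  a : ℕ → ℤ
  /-- signs `ε_i` -/
  e : ℕ → ℤ
  /-- tails: `t i = α_i`, `t 0 = α` -/
  t : ℕ → ℝ
  ha : ∀ i, 1 ≤ i → 2 ≤ a i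
  he : ∀ i, e i = 1 ∨ e i = -1
  he1 : e 1 = 1
  ht0 : t 0 = α
  htpos : ∀ i, 0 < t i
  htlt1 : ∀ i, t i < 1
  hrec : ∀ i, t i = 1 / ((a (i + 1) : ℝ) + (e (i + 2) : ℝ) * t (i + 1))
  /-- condition (i): `a_i = 2` implies `ε_i = +1` or `ε_{i+1} = +1` -/
  hcond1 : ∀ i, 1 ≤ i → a i = 2 → e i = 1 ∨ e (i + 1) = 1
  /-- condition (ii): if `a_i = 2`, `ε_i = -1` then `1/ᾱ_{i-1} - 1/α_i ≥ 1` -/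
  hcond2 : ∀ i, 1 ≤ i → a i = 2 → e i = -1 → 1 / ab a e (i - 1) - 1 / t i ≥ 1
  /-- condition (iii): if `a_i = 2`, `ε_{i+1} = -1` then `1/α_i - 1/ᾱ_{i-1} > 1` -/
  hcond3 : ∀ i, 1 ≤ i → a i = 2 → e (i + 1) = -1 → 1 / t i - 1 / ab a e (i - 1) > 1
  /-- condition (iv): no block `2, (-3,)^k, -2` in the sequence `(ε_i a_i)` -/
  hcond4 : ∀ i k, 1 ≤ i →
    ¬(e i * a i = 2 ∧ (∀ j, j < k → e (i + 1 + j) * a (i + 1 + j) = -3) ∧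
        e (i + 1 + k) * a (i + 1 + k) = -2)

namespace ANIE

variable {α : ℝ}

/-- `D n = D_{n-1} = α_0 α_1 ⋯ α_{n-1}` (so `D 0 = 1`, `D 1 = α`). -/
noncomputable def D (E : ANIE α) (n : ℕ) : ℝ := ∏ j ∈ Finset.range n, E.t j

/-- The number of indices `1 ≤ k ≤ i` with `a_k` odd. -/
noncomputable def oddIdx (E : ANIE α) (i : ℕ) : ℕ :=
  ((Finset.Icc 1 i).filter fun k => Odd (E.a k)).card

/-- `λ_i`: zero if `a_i` is even, `(-1)^j` if `a_i = a_{n_j}` is the `j`-th odd partial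
quotient. -/
noncomputable def lam (E : ANIE α) (i : ℕ) : ℤ :=
  if Odd (E.a i) then (-1) ^ E.oddIdx i else 0

/-- `γ_* = Σ_{i≥1} (a_i - 1 + ε_i + λ_i)/2 · D_{i-1}`. -/
noncomputable def gammaStar (E : ANIE α) : ℝ :=
  ∑' k : ℕ,
    (((E.a (k + 1) : ℝ) - 1 + (E.e (k + 1) : ℝ) + (E.lam (k + 1) : ℝ)) / 2) * E.D (k + 1)

/-- `ᾱ_i = q_{i-1}/q_i`. -/
noncomputable def abar (E : ANIE α) (i : ℕ) : ℝ := ab E.a E.e i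

/-- `δ_i = -(-ε_1)(-ε_2)⋯(-ε_{i+1})`. -/
noncomputable def delta (E : ANIE α) (i : ℕ) : ℤ := -∏ j ∈ Finset.Icc 1 (i + 1), (-E.e j)

/-- `d_n^- = (Σ_{i=1}^n t_i δ_{i-1} q_{i-1}) / (δ_{n-1} q_n)` for `γ_*` (`t_i = λ_i`). -/
noncomputable def dminus (E : ANIE α) (n : ℕ) : ℝ :=
  (∑ i ∈ Finset.Icc 1 n, (E.lam i : ℝ) * (E.delta (i - 1) : ℝ) * (qs E.a E.e (i - 1) : ℝ)) /
    ((E.delta (n - 1) : ℝ) * (qs E.a E.e n : ℝ))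

/-- `d_n^+ = (Σ_{i=n+1}^∞ t_i D_{i-1}) / D_{n-1}` for `γ_*` (`t_i = λ_i`). -/
noncomputable def dplus (E : ANIE α) (n : ℕ) : ℝ :=
  (∑' k : ℕ, (E.lam (n + 1 + k) : ℝ) * E.D (n + 1 + k)) / E.D n

/-- `i ∈ S(γ_*)`: `|d_i^-| ≤ 1 - ᾱ_i` and `-(1-ε_{i+1}α_i) ≤ d_i^+ ≤ 1+ε_{i+1}α_i`. -/
def inS (E : ANIE α) (i : ℕ) : Prop :=
  |E.dminus i| ≤ 1 - E.abar i ∧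
    -(1 - (E.e (i + 1) : ℝ) * E.t i) ≤ E.dplus i ∧
      E.dplus i ≤ 1 + (E.e (i + 1) : ℝ) * E.t i

end ANIE

/-!
Let `σ_n` be the sign of the first nonzero `λ_i` with `i > n`. It changes exactly at the odd partial
quotients, so `y_n = σ_n d_n^+` satisfies `y_n = α_n (1 - y_{n+1})` when `a_{n+1}` is odd and
`y_n = α_n y_{n+1}` when it is even. Condition (i) forces `α_n ≤ 1 / (a_{n+1} - 1/2)`, that is,
`α_n ≤ 2/3` in general and `α_n ≤ 2/5` for odd `a_{n+1}`. Hence the recurrence preserves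
`0 ≤ y_n ≤ min (α_n, 2/5, 1 - α_n)`, and the series defining `d_n^+` converges geometrically.

Likewise `x_n = σ_n d_n^-` satisfies `x_{n+1} = -ᾱ_{n+1} (1 - ε_{n+1} x_n)` or
`x_{n+1} = -ᾱ_{n+1} ε_{n+1} x_n`. Both preserve the asymmetric constraint
`max (-1/2, -(1 - ᾱ_n)) ≤ x_n ≤ (1 - ᾱ_n) / 2`. The delicate case is `a_{n+1} = 2`,
`ε_{n+1} = -1`, where `ᾱ_{n+1}` may exceed `1/2`; there `1 - ᾱ_{n+1} = ᾱ_{n+1} (1 - ᾱ_n)`.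
-/

/-- The range of `σ_n d_n^-` when `ᾱ_n = c`, where `σ_n` is the sign of the next nonzero `λ`:
the constraint preserved by the recurrence for `d_n^-`. -/
def backwardInterval (c : ℝ) : Set ℝ :=
  {x | -(1 / 2) ≤ x ∧ -(1 - c) ≤ x ∧ x ≤ (1 - c) / 2}

section BackwardInterval

variable {b c x ε : ℝ}

lemma abs_le_half_of_mem_backwardInterval (hc : 0 ≤ c) (hx : x ∈ backwardInterval c) :
    |x| ≤ 1 / 2 :=
  abs_le.mpr ⟨hx.1, by linarith [hx.2.2]⟩

lemma abs_le_one_sub_of_mem_backwardInterval (hc : c ≤ 1) (hx : x ∈ backwardInterval c) :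
    |x| ≤ 1 - c :=
  abs_le.mpr ⟨hx.2.1, by linarith [hx.2.2]⟩

lemma mem_backwardInterval_of_le_half (hc : c ≤ 1 / 2) (hx : x ∈ Set.Icc (-(1 / 2)) (1 / 4)) :
    x ∈ backwardInterval c :=
  ⟨hx.1, by linarith [hx.1], by linarith [hx.2]⟩

lemma neg_mul_one_sub_mem_backwardInterval {a : ℝ} (ha : 3 ≤ a) (hε : ε = 1 ∨ ε = -1)
    (hc : 0 ≤ c) (hb : 0 ≤ b) (hb_half : b ≤ 1 / 2) (hbc : b * (a + ε * c) = 1)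
    (hx : x ∈ backwardInterval c) : -(b * (1 - ε * x)) ∈ backwardInterval b := by
  have hx_abs := abs_le.mp (abs_le_half_of_mem_backwardInterval hc hx)
  have h_nonneg : 0 ≤ 1 - ε * x := by
    rcases hε with rfl | rfl <;> linarith
  have h_le : 1 - ε * x ≤ (a + ε * c) / 2 := by
    rcases hε with rfl | rfl <;> linarith [hx.1, hx.2.2]
  have h_mul_le : b * (1 - ε * x) ≤ 1 / 2 := by
    calc b * (1 - ε * x) ≤ b * ((a + ε * c) / 2) := mul_le_mul_of_nonneg_left h_le hb
      _ = 1 / 2 := by rw [← mul_div_assoc, hbc]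
  exact mem_backwardInterval_of_le_half hb_half
    ⟨by linarith, by linarith [mul_nonneg hb h_nonneg]⟩

lemma neg_mul_mem_backwardInterval (hε : |ε| = 1) (hc : 0 ≤ c) (hb : 0 ≤ b) (hb_half : b ≤ 1 / 2)
    (hx : x ∈ backwardInterval c) : -(b * (ε * x)) ∈ backwardInterval b := by
  have h_abs : |b * (ε * x)| ≤ 1 / 4 := by
    rw [abs_mul, abs_mul, hε, one_mul, abs_of_nonneg hb]
    calc b * |x| ≤ 1 / 2 * (1 / 2) := by
          gcongr
          exact abs_le_half_of_mem_backwardInterval hc hx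
      _ = 1 / 4 := by norm_num
  obtain ⟨h_lower, h_upper⟩ := abs_le.mp h_abs
  exact mem_backwardInterval_of_le_half hb_half ⟨by linarith, by linarith⟩

lemma mul_mem_backwardInterval (hb : 0 ≤ b) (hb_one : b ≤ 1) (hbc : 1 - b = b * (1 - c))
    (hx : x ∈ backwardInterval c) : b * x ∈ backwardInterval b := by
  obtain ⟨hx_half, hx_lower, hx_upper⟩ := hx
  refine ⟨?_, ?_, ?_⟩
  · linarith [mul_le_mul_of_nonneg_left hx_half hb]
  · linarith [mul_le_mul_of_nonneg_left hx_lower hb]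
  · linarith [mul_le_mul_of_nonneg_left hx_upper hb]

end BackwardInterval

lemma qs_pos_and_lt_qs_succ {a e : ℕ → ℤ} (ha : ∀ i, 1 ≤ i → 2 ≤ a i) (he : ∀ i, -1 ≤ e i)
    (n : ℕ) : 0 < qs a e n ∧ qs a e n < qs a e (n + 1) := by
  induction n with
  | zero =>
    have := ha 1 le_rfl
    simp only [qs]
    omega
  | succ n ih =>
    obtain ⟨h_pos, h_lt⟩ := ih
    refine ⟨h_pos.trans h_lt, ?_⟩
    calc qs a e (n + 1) < 2 * qs a e (n + 1) + -1 * qs a e n := by linarith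
      _ ≤ a (n + 2) * qs a e (n + 1) + e (n + 2) * qs a e n := by
          gcongr
          exacts [(h_pos.trans h_lt).le, ha _ (by omega), he _]

namespace ANIE

variable {α : ℝ} (E : ANIE α)

lemma e_eq_one_or_neg_one (n : ℕ) : (E.e n : ℝ) = 1 ∨ (E.e n : ℝ) = -1 := by
  exact_mod_cast E.he n

lemma abs_e (n : ℕ) : |(E.e n : ℝ)| = 1 := by
  rcases E.e_eq_one_or_neg_one n with h | h <;> simp [h]

lemma two_le_a (n : ℕ) : (2 : ℝ) ≤ E.a (n + 1) := by
  exact_mod_cast E.ha (n + 1) (by omega)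

lemma three_le_a {n : ℕ} (h : E.a (n + 1) ≠ 2) : (3 : ℝ) ≤ E.a (n + 1) := by
  have := E.ha (n + 1) (by omega)
  exact_mod_cast (show 3 ≤ E.a (n + 1) by omega)

lemma a_ne_two_of_odd {n : ℕ} (h : Odd (E.a n)) : E.a n ≠ 2 := by
  intro h_two
  rw [h_two] at h
  exact absurd h (by decide)

lemma two_le_a_add_e_mul {n m : ℕ} {x : ℝ} (h : E.a (n + 1) ≠ 2 ∨ E.e m = 1) (hx₀ : 0 ≤ x)
    (hx₁ : x ≤ 1) : 2 ≤ (E.a (n + 1) : ℝ) + E.e m * x := by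
  rcases E.e_eq_one_or_neg_one m with he | he
  · rw [he]
    linarith [E.two_le_a n]
  · have ha : E.a (n + 1) ≠ 2 := h.resolve_right fun h_one => by norm_num [h_one] at he
    rw [he]
    linarith [E.three_le_a ha]

/-! ### The sign of the next nonzero `λ` -/

/-- The sign `σ_n = (-1)^{j+1}` of the first nonzero `λ_i` with `i > n`, where `j` counts the odd
partial quotients among `a_1, …, a_n`. -/
noncomputable def nextSign (n : ℕ) : ℝ := (-1) ^ (E.oddIdx n + 1)

lemma abs_nextSign (n : ℕ) : |E.nextSign n| = 1 := by
  simp [nextSign]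

lemma nextSign_mul_self (n : ℕ) : E.nextSign n * E.nextSign n = 1 := by
  simp [nextSign, ← mul_pow]

lemma oddIdx_succ (n : ℕ) :
    E.oddIdx (n + 1) = if Odd (E.a (n + 1)) then E.oddIdx n + 1 else E.oddIdx n := by
  unfold oddIdx
  rw [← Finset.insert_Icc_right_eq_Icc_add_one (by omega), Finset.filter_insert]
  split_ifs
  · exact Finset.card_insert_of_notMem (by simp)
  · rfl

lemma nextSign_succ_of_odd {n : ℕ} (h : Odd (E.a (n + 1))) :
    E.nextSign (n + 1) = -E.nextSign n := by
  rw [nextSign, nextSign, oddIdx_succ, if_pos h, pow_succ, mul_neg_one]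

lemma nextSign_succ_of_not_odd {n : ℕ} (h : ¬Odd (E.a (n + 1))) :
    E.nextSign (n + 1) = E.nextSign n := by
  rw [nextSign, nextSign, oddIdx_succ, if_neg h]

lemma lam_succ_of_odd {n : ℕ} (h : Odd (E.a (n + 1))) : (E.lam (n + 1) : ℝ) = E.nextSign n := by
  simp [lam, nextSign, oddIdx_succ, h]

lemma lam_of_not_odd {n : ℕ} (h : ¬Odd (E.a n)) : (E.lam n : ℝ) = 0 := by
  simp [lam, h]

lemma abs_lam_le_one (n : ℕ) : |(E.lam n : ℝ)| ≤ 1 := by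
  unfold lam
  split_ifs <;> simp

/-! ### Tails and the forward sum `d_n^+` -/

lemma t_le_half_of_e_eq_neg_one {n : ℕ} (h : E.e (n + 1) = -1) : E.t n ≤ 1 / 2 := by
  have h_or : E.a (n + 1) ≠ 2 ∨ E.e (n + 2) = 1 := by
    refine or_iff_not_imp_left.mpr fun ha => ?_
    exact (E.hcond1 (n + 1) (by omega) (not_not.mp ha)).resolve_left (by omega)
  rw [E.hrec n]
  exact one_div_le_one_div_of_le two_pos
    (E.two_le_a_add_e_mul h_or (E.htpos _).le (E.htlt1 _).le)

lemma neg_half_le_e_mul_t (n : ℕ) : -(1 / 2) ≤ (E.e (n + 1) : ℝ) * E.t n := by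
  rcases E.he (n + 1) with he | he
  · rw [he]
    push_cast
    linarith [E.htpos n]
  · rw [he]
    push_cast
    linarith [E.t_le_half_of_e_eq_neg_one he]

lemma t_le_one_div (n : ℕ) : E.t n ≤ 1 / (E.a (n + 1) - 1 / 2) := by
  rw [E.hrec n]
  exact one_div_le_one_div_of_le (by linarith [E.two_le_a n])
    (by linarith [E.neg_half_le_e_mul_t (n + 1)])

lemma t_le_two_thirds (n : ℕ) : E.t n ≤ 2 / 3 := by
  calc E.t n ≤ 1 / (E.a (n + 1) - 1 / 2) := E.t_le_one_div n
    _ ≤ 1 / (2 - 1 / 2) := by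
        gcongr
        exact E.two_le_a n
    _ = 2 / 3 := by norm_num

lemma t_le_two_fifths_of_odd {n : ℕ} (h : Odd (E.a (n + 1))) : E.t n ≤ 2 / 5 := by
  calc E.t n ≤ 1 / (E.a (n + 1) - 1 / 2) := E.t_le_one_div n
    _ ≤ 1 / (3 - 1 / 2) := by
        gcongr
        exact E.three_le_a (E.a_ne_two_of_odd h)
    _ = 2 / 5 := by norm_num

lemma D_pos (n : ℕ) : 0 < E.D n :=
  Finset.prod_pos fun j _ => E.htpos j

lemma D_succ (n : ℕ) : E.D (n + 1) = E.D n * E.t n :=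
  Finset.prod_range_succ _ _

lemma D_le_pow (n : ℕ) : E.D n ≤ (2 / 3) ^ n := by
  calc E.D n ≤ ∏ _j ∈ Finset.range n, (2 / 3 : ℝ) :=
        Finset.prod_le_prod (fun j _ => (E.htpos j).le) fun j _ => E.t_le_two_thirds j
    _ = (2 / 3) ^ n := by rw [Finset.prod_const, Finset.card_range]

lemma summable_lam_mul_D : Summable fun i => (E.lam i : ℝ) * E.D i := by
  refine Summable.of_norm_bounded
    (summable_geometric_of_lt_one (by norm_num) (by norm_num : (2 / 3 : ℝ) < 1)) fun i => ?_
  rw [Real.norm_eq_abs, abs_mul, abs_of_pos (E.D_pos i)]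
  calc |(E.lam i : ℝ)| * E.D i ≤ 1 * E.D i :=
        mul_le_mul_of_nonneg_right (E.abs_lam_le_one i) (E.D_pos i).le
    _ ≤ (2 / 3) ^ i := by rw [one_mul]; exact E.D_le_pow i

/-- The sum `d_n^+` truncated to its first `N` terms. -/
noncomputable def dplusPartial (N n : ℕ) : ℝ :=
  (∑ k ∈ Finset.range N, (E.lam (n + 1 + k) : ℝ) * E.D (n + 1 + k)) / E.D n

lemma tendsto_dplusPartial (n : ℕ) :
    Tendsto (fun N => E.dplusPartial N n) atTop (nhds (E.dplus n)) := by
  have h_summable : Summable fun k => (E.lam (n + 1 + k) : ℝ) * E.D (n + 1 + k) := by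
    simpa only [add_comm (n + 1)] using (summable_nat_add_iff (n + 1)).mpr E.summable_lam_mul_D
  exact h_summable.hasSum.tendsto_sum_nat.div_const _

lemma dplusPartial_succ (N n : ℕ) :
    E.dplusPartial (N + 1) n = E.t n * (E.lam (n + 1) + E.dplusPartial N (n + 1)) := by
  have hD := (E.D_pos n).ne'
  have ht := (E.htpos n).ne'
  have h_shift (k : ℕ) : n + 1 + 1 + k = n + 1 + (k + 1) := by omega
  simp only [dplusPartial, Finset.sum_range_succ', add_zero, E.D_succ n, h_shift]
  field_simp
  ring

lemma nextSign_mul_dplusPartial_succ_of_odd (N : ℕ) {n : ℕ} (h : Odd (E.a (n + 1))) :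
    E.nextSign n * E.dplusPartial (N + 1) n =
      E.t n * (1 - E.nextSign (n + 1) * E.dplusPartial N (n + 1)) := by
  rw [dplusPartial_succ, E.lam_succ_of_odd h, E.nextSign_succ_of_odd h]
  linear_combination E.t n * E.nextSign_mul_self n

lemma nextSign_mul_dplusPartial_succ_of_not_odd (N : ℕ) {n : ℕ} (h : ¬Odd (E.a (n + 1))) :
    E.nextSign n * E.dplusPartial (N + 1) n =
      E.t n * (E.nextSign (n + 1) * E.dplusPartial N (n + 1)) := by
  rw [dplusPartial_succ, E.lam_of_not_odd h, E.nextSign_succ_of_not_odd h]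
  ring

lemma nextSign_mul_dplusPartial_mem_Icc (N n : ℕ) :
    E.nextSign n * E.dplusPartial N n ∈
      Set.Icc 0 (min (E.t n) (min (2 / 5) (1 - E.t n))) := by
  have ht := E.htpos n
  have ht_le := E.t_le_two_thirds n
  induction N generalizing n with
  | zero =>
    have h_zero : E.dplusPartial 0 n = 0 := by simp [dplusPartial]
    rw [h_zero, mul_zero]
    exact ⟨le_rfl, le_min ht.le (le_min (by norm_num) (by linarith))⟩
  | succ N ih =>
    obtain ⟨hy_nonneg, hy_le⟩ := ih (n + 1) (E.htpos _) (E.t_le_two_thirds _)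
    have hy_le : E.nextSign (n + 1) * E.dplusPartial N (n + 1) ≤ 2 / 5 :=
      hy_le.trans ((min_le_right _ _).trans (min_le_left _ _))
    by_cases h_odd : Odd (E.a (n + 1))
    · rw [E.nextSign_mul_dplusPartial_succ_of_odd N h_odd]
      have h_le := mul_le_of_le_one_right ht.le (sub_le_self 1 hy_nonneg)
      have ht_odd := E.t_le_two_fifths_of_odd h_odd
      exact ⟨mul_nonneg ht.le (by linarith),
        le_min h_le (le_min (by linarith) (by linarith))⟩
    · rw [E.nextSign_mul_dplusPartial_succ_of_not_odd N h_odd]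
      have h_le := mul_le_mul_of_nonneg_left hy_le ht.le
      exact ⟨mul_nonneg ht.le hy_nonneg,
        le_min (by linarith) (le_min (by linarith) (by linarith))⟩

lemma abs_dplus_le (n : ℕ) : |E.dplus n| ≤ min (E.t n) (min (2 / 5) (1 - E.t n)) := by
  refine le_of_tendsto' (E.tendsto_dplusPartial n).abs fun N => ?_
  obtain ⟨h_nonneg, h_le⟩ := E.nextSign_mul_dplusPartial_mem_Icc N n
  calc |E.dplusPartial N n| = |E.nextSign n * E.dplusPartial N n| := by
        rw [abs_mul, abs_nextSign, one_mul]
    _ = E.nextSign n * E.dplusPartial N n := abs_of_nonneg h_nonneg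
    _ ≤ _ := h_le

/-! ### Reversed tails and the backward sum `d_n^-` -/

lemma neg_one_le_e (n : ℕ) : -1 ≤ E.e n := by
  rcases E.he n with h | h <;> omega

lemma qs_pos (n : ℕ) : (0 : ℝ) < qs E.a E.e n := by
  exact_mod_cast (qs_pos_and_lt_qs_succ E.ha E.neg_one_le_e n).1

lemma qs_lt_qs_succ (n : ℕ) : (qs E.a E.e n : ℝ) < qs E.a E.e (n + 1) := by
  exact_mod_cast (qs_pos_and_lt_qs_succ E.ha E.neg_one_le_e n).2

lemma abar_zero : E.abar 0 = 0 := by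
  simp [abar, ab]

lemma abar_succ (n : ℕ) :
    E.abar (n + 1) = (qs E.a E.e n : ℝ) / (qs E.a E.e (n + 1) : ℝ) := by
  simp [abar, ab]

lemma abar_nonneg (n : ℕ) : 0 ≤ E.abar n := by
  cases n with
  | zero => exact E.abar_zero.ge
  | succ n =>
    rw [abar_succ]
    exact (div_pos (E.qs_pos n) (E.qs_pos (n + 1))).le

lemma abar_le_one (n : ℕ) : E.abar n ≤ 1 := by
  cases n with
  | zero => rw [abar_zero]; exact zero_le_one
  | succ n =>
    rw [abar_succ]
    exact (div_lt_one (E.qs_pos (n + 1))).mpr (E.qs_lt_qs_succ n) |>.le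

lemma abar_succ_mul (n : ℕ) :
    E.abar (n + 1) * ((E.a (n + 1) : ℝ) + E.e (n + 1) * E.abar n) = 1 := by
  have hq_succ := (E.qs_pos (n + 1)).ne'
  cases n with
  | zero =>
    rw [abar_succ, abar_zero, mul_zero, add_zero, div_mul_eq_mul_div, div_eq_one_iff_eq hq_succ]
    simp [qs]
  | succ n =>
    have hq := (E.qs_pos (n + 1)).ne'
    rw [abar_succ, abar_succ, div_mul_eq_mul_div, div_eq_one_iff_eq hq_succ, qs]
    push_cast
    field_simp

lemma abar_succ_le_half {n : ℕ} (h : E.a (n + 1) ≠ 2 ∨ E.e (n + 1) = 1) :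
    E.abar (n + 1) ≤ 1 / 2 := by
  rw [eq_one_div_of_mul_eq_one_left (E.abar_succ_mul n)]
  exact one_div_le_one_div_of_le two_pos
    (E.two_le_a_add_e_mul h (E.abar_nonneg n) (E.abar_le_one n))

lemma delta_succ (n : ℕ) : E.delta (n + 1) = E.delta n * -E.e (n + 2) := by
  unfold delta
  rw [Finset.prod_Icc_succ_top (by omega), neg_mul]

lemma delta_ne_zero (n : ℕ) : (E.delta n : ℝ) ≠ 0 := by
  rw [Int.cast_ne_zero, delta, neg_ne_zero, Finset.prod_ne_zero_iff]
  intro j _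
  rcases E.he j with h | h <;> simp [h]

lemma dminus_zero : E.dminus 0 = 0 := by
  simp [dminus]

lemma dminus_succ (n : ℕ) :
    E.dminus (n + 1) = E.abar (n + 1) * (E.lam (n + 1) - E.e (n + 1) * E.dminus n) := by
  have hq := (E.qs_pos n).ne'
  have hq_succ := (E.qs_pos (n + 1)).ne'
  rw [abar_succ]
  cases n with
  | zero =>
    have hδ := E.delta_ne_zero 0
    rw [dminus_zero, mul_zero, sub_zero]
    simp only [dminus, zero_add, Finset.Icc_self, Finset.sum_singleton, Nat.sub_self]
    field_simp
  | succ n =>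
    have hδ := E.delta_ne_zero n
    simp only [dminus, Nat.add_sub_cancel]
    rw [Finset.sum_Icc_succ_top (by omega), Nat.add_sub_cancel, E.delta_succ n]
    push_cast
    rcases E.e_eq_one_or_neg_one (n + 2) with he | he <;> rw [he] <;> field_simp <;> ring

lemma nextSign_mul_dminus_succ_of_odd {n : ℕ} (h : Odd (E.a (n + 1))) :
    E.nextSign (n + 1) * E.dminus (n + 1) =
      -(E.abar (n + 1) * (1 - E.e (n + 1) * (E.nextSign n * E.dminus n))) := by
  rw [dminus_succ, E.lam_succ_of_odd h, E.nextSign_succ_of_odd h]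
  linear_combination -E.abar (n + 1) * E.nextSign_mul_self n

lemma nextSign_mul_dminus_succ_of_not_odd {n : ℕ} (h : ¬Odd (E.a (n + 1))) :
    E.nextSign (n + 1) * E.dminus (n + 1) =
      -(E.abar (n + 1) * (E.e (n + 1) * (E.nextSign n * E.dminus n))) := by
  rw [dminus_succ, E.lam_of_not_odd h, E.nextSign_succ_of_not_odd h]
  ring

lemma nextSign_mul_dminus_mem_backwardInterval (n : ℕ) :
    E.nextSign n * E.dminus n ∈ backwardInterval (E.abar n) := by
  induction n with
  | zero =>
    rw [dminus_zero, abar_zero, mul_zero]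
    norm_num [backwardInterval]
  | succ n ih =>
    have hc := E.abar_nonneg n
    have hb := E.abar_nonneg (n + 1)
    have hbc := E.abar_succ_mul n
    by_cases h_odd : Odd (E.a (n + 1))
    · have ha := E.a_ne_two_of_odd h_odd
      rw [E.nextSign_mul_dminus_succ_of_odd h_odd]
      exact neg_mul_one_sub_mem_backwardInterval (E.three_le_a ha)
        (E.e_eq_one_or_neg_one (n + 1)) hc hb (E.abar_succ_le_half (.inl ha)) hbc ih
    · rw [E.nextSign_mul_dminus_succ_of_not_odd h_odd]
      by_cases h_half : E.a (n + 1) ≠ 2 ∨ E.e (n + 1) = 1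
      · exact neg_mul_mem_backwardInterval (E.abs_e _) hc hb (E.abar_succ_le_half h_half) ih
      · obtain ⟨ha, he⟩ := not_or.mp h_half
        rw [not_not.mp ha, (E.he (n + 1)).resolve_left he] at hbc
        rw [(E.he (n + 1)).resolve_left he]
        push_cast at hbc ⊢
        rw [neg_one_mul, mul_neg, neg_neg]
        exact mul_mem_backwardInterval hb (E.abar_le_one _) (by linarith) ih

lemma abs_nextSign_mul_dminus (n : ℕ) : |E.nextSign n * E.dminus n| = |E.dminus n| := by
  rw [abs_mul, abs_nextSign, one_mul]

lemma abs_dminus_le_half (n : ℕ) : |E.dminus n| ≤ 1 / 2 := by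
  rw [← abs_nextSign_mul_dminus]
  exact abs_le_half_of_mem_backwardInterval (E.abar_nonneg n)
    (E.nextSign_mul_dminus_mem_backwardInterval n)

lemma abs_dminus_le_one_sub_abar (n : ℕ) : |E.dminus n| ≤ 1 - E.abar n := by
  rw [← abs_nextSign_mul_dminus]
  exact abs_le_one_sub_of_mem_backwardInterval (E.abar_le_one n)
    (E.nextSign_mul_dminus_mem_backwardInterval n)

lemma abs_dminus_le_mul_abar (n : ℕ) : |E.dminus n| ≤ 3 / 2 * E.abar n := by
  cases n with
  | zero => simp [dminus_zero, abar_zero]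
  | succ n =>
    have h_abs : |E.lam (n + 1) - E.e (n + 1) * E.dminus n| ≤ 3 / 2 := by
      calc |E.lam (n + 1) - E.e (n + 1) * E.dminus n|
          ≤ |(E.lam (n + 1) : ℝ)| + |E.e (n + 1) * E.dminus n| := abs_sub _ _
        _ = |(E.lam (n + 1) : ℝ)| + |E.dminus n| := by rw [abs_mul, abs_e, one_mul]
        _ ≤ 1 + 1 / 2 := add_le_add (E.abs_lam_le_one _) (E.abs_dminus_le_half n)
        _ = 3 / 2 := by norm_num
    rw [dminus_succ, abs_mul, abs_of_nonneg (E.abar_nonneg _), mul_comm]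
    exact mul_le_mul_of_nonneg_right h_abs (E.abar_nonneg _)

lemma forall_inS : ∀ n, E.inS n := by
  intro n
  have h_dplus : |E.dplus n| ≤ 1 - E.t n :=
    (E.abs_dplus_le n).trans ((min_le_right _ _).trans (min_le_right _ _))
  have h_et : |E.e (n + 1) * E.t n| = E.t n := by
    rw [abs_mul, abs_e, one_mul, abs_of_pos (E.htpos n)]
  obtain ⟨h_lower, h_upper⟩ := abs_le.mp h_dplus
  obtain ⟨h_et_lower, h_et_upper⟩ := abs_le.mp h_et.le
  exact ⟨E.abs_dminus_le_one_sub_abar n, by linarith, by linarith⟩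

end ANIE

theorem stmt10_general {α : ℝ} (E : ANIE α) :
    (∀ i, 1 ≤ i → E.inS i) ∧
      ∀ i, 1 ≤ i →
        |E.dplus i| ≤ min (E.t i) (2 / 5) ∧
          |E.dminus i| ≤ min (1 / 2) (3 / 2 * E.abar i) := by
  refine ⟨fun i _ => E.forall_inS i, fun i _ => ⟨?_, ?_⟩⟩
  · exact (E.abs_dplus_le i).trans (min_le_min_left _ (min_le_left _ _))
  · exact le_min (E.abs_dminus_le_half i) (E.abs_dminus_le_mul_abar i)

/-- Lemma 3 (adjusted expansion, `R = 2` case): every `i` lies in `S(γ_*)` and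
`|d_i^+| ≤ min{α_i, 2/5}`, `|d_i^-| ≤ min{1/2, (3/2)ᾱ_i}`. -/
theorem stmt10 (α : ℝ) (hirr : Irrational α) (h0 : 0 < α) (h12 : α < 1 / 2)
    (E : ANIE α) (hfreq : ∃ᶠ i in Filter.atTop, E.a i = 2) :
    (∀ i, 1 ≤ i → E.inS i) ∧
      ∀ i, 1 ≤ i →
        |E.dplus i| ≤ min (E.t i) (2 / 5) ∧
          |E.dminus i| ≤ min (1 / 2) (3 / 2 * E.abar i) :=
  stmt10_general E
end
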